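/- arXiv:1910.13492 — 11 statements merged into one kernel-verified Lean document; each statement's English description precedes it below -/
import Mathlib

section
/- Proposition (rank of the twist group, Prop. 5.1). Let (V, E, s, t, ℓ, κ) be a connected enhanced level graph of depth N and let φ be the associated level rotation homomorphism. Then: (i) the set of tuples n ∈ ℤ^{{0,−1,…,−N}} satisfying n_{ℓ(s(e))} = n_{ℓ(t(e))} for every edge e ∈ E is exactly the subgroup ℤ·(1,1,…,1) of constant tuples; (ii) ker φ is a subgroup of finite index in ℤ^{{0,−1,…,−N}} ≅ ℤ^{N+1}; (iii) there exists a subgroup W of ker φ which is free abelian of rank N such that ker φ is the internal direct sum of ℤ·(1,…,1) and W. (In the paper's notation: ker(τ_Λ^•) ≅ ℤ is generated by (1,…,1), the vertical twist group is free abelian of rank N, and ker(φ_Λ^•) = vTw_Λ ⊕ ℤ.) -/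
/-!
Along an edge the tuple `n ∘ ℓ` does not change in (i), so connectedness makes it constant.
The codomain of `φ` is finite, which gives (ii). For (iii), evaluation at the top level is a
functional `f` with `f (1, …, 1) = 1`, so `ℤ^{N+1} = ℤ·(1, …, 1) ⊕ ker f`. As `(1, …, 1) ∈ ker φ`,
the modular law cuts this down to `ker φ = ℤ·(1, …, 1) ⊕ (ker f ⊓ ker φ)`, and `ker f ⊓ ker φ`,
having finite index in `ker f`, has the same rank `N`.
-/

open AddSubgroup Module Relation

universe u

theorem eq_of_reflTransGen {V α : Type*} {r : V → V → Prop} {f : V → α}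
    (hf : ∀ v w, r v w → f v = f w) {v w : V} (h : ReflTransGen r v w) : f v = f w := by
  simpa only [reflTransGen_eq_self] using h.lift (p := Eq) f hf

theorem forall_source_eq_target_iff_exists_eq_const {V E ι α : Type*} [Nonempty ι]
    {s t : E → V} {ℓ : V → ι}
    (hconn : ∀ v w, ReflTransGen (fun a b ↦ ∃ e, s e = a ∧ t e = b ∨ s e = b ∧ t e = a) v w)
    (hsurj : ℓ.Surjective) (n : ι → α) :
    (∀ e, n (ℓ (s e)) = n (ℓ (t e))) ↔ ∃ m, n = fun _ ↦ m := by
  refine ⟨fun h ↦ ?_, by rintro ⟨m, rfl⟩ e; rfl⟩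
  obtain ⟨i⟩ := ‹Nonempty ι›
  refine ⟨n i, funext fun j ↦ ?_⟩
  obtain ⟨v, rfl⟩ := hsurj i
  obtain ⟨w, rfl⟩ := hsurj j
  refine eq_of_reflTransGen (f := n ∘ ℓ) ?_ (hconn w v)
  rintro _ _ ⟨e, ⟨rfl, rfl⟩ | ⟨rfl, rfl⟩⟩
  exacts [h e, (h e).symm]

theorem isCompl_zmultiples_ker {G : Type*} [AddGroup G] {f : G →+ ℤ} {u : G} (hu : f u = 1) :
    IsCompl (zmultiples u) f.ker := by
  refine ⟨disjoint_def.2 ?_, codisjoint_iff_le_sup.2 fun x _ ↦ ?_⟩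
  · rintro _ ⟨m, rfl⟩ hm
    have hm0 : m = 0 := by simpa [hu] using hm
    simp [hm0]
  · have hker : -(f x • u) + x ∈ f.ker := by simp [AddMonoidHom.mem_ker, hu]
    simpa only [add_neg_cancel_left] using
      add_mem_sup (zsmul_mem_zmultiples u (f x)) hker

theorem finrank_ker_add_finrank_of_surjective {R M' : Type*} {M : Type u} [Ring R]
    [StrongRankCondition R] [HasRankNullity.{u} R] [AddCommGroup M] [Module R M]
    [Module.Finite R M] [AddCommGroup M'] [Module R M'] {f : M →ₗ[R] M'}
    (hf : Function.Surjective f) :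
    finrank R f.ker + finrank R M' = finrank R M := by
  rw [← (f.quotKerEquivOfSurjective hf).finrank_eq, add_comm, f.ker.finrank_quotient_add_finrank]

section FreeAbelian

variable {G : Type*} [AddCommGroup G] [Module.Finite ℤ G]

instance moduleFinite_int_addSubgroup (H : AddSubgroup G) : Module.Finite ℤ H :=
  inferInstanceAs (Module.Finite ℤ H.toIntSubmodule)

variable [IsAddTorsionFree G]

theorem nonempty_addEquiv_fin_of_finrank_eq {n : ℕ} (h : finrank ℤ G = n) :
    Nonempty (G ≃+ (Fin n → ℤ)) :=
  (FiniteDimensional.nonempty_linearEquiv_of_finrank_eq (h.trans (finrank_fin_fun ℤ).symm)).map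
    LinearEquiv.toAddEquiv

theorem finrank_ker_inf_add_one {f : G →+ ℤ} (hf : Function.Surjective f)
    (K : AddSubgroup G) [K.FiniteIndex] :
    finrank ℤ ↥(f.ker ⊓ K) + 1 = finrank ℤ G := by
  have hker : finrank ℤ f.ker + finrank ℤ ℤ = finrank ℤ G :=
    finrank_ker_add_finrank_of_surjective (f := f.toIntLinearMap) hf
  have hK : K.IsFiniteRelIndex f.ker := isFiniteRelIndex_of_finiteIndex
  have : (f.ker ⊓ K).IsFiniteRelIndex f.ker :=
    ⟨(inf_relIndex_left f.ker K).trans_ne hK.relIndex_ne_zero⟩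
  rw [finrank_eq_of_isFiniteRelIndex inf_le_left, ← hker, finrank_self]

theorem exists_addEquiv_fin_compl_zmultiples {N : ℕ} (hG : finrank ℤ G = N + 1)
    {f : G →+ ℤ} {u : G} (hfu : f u = 1) {K : AddSubgroup G} [K.FiniteIndex] (huK : u ∈ K) :
    ∃ W ≤ K, Nonempty (W ≃+ (Fin N → ℤ)) ∧ zmultiples u ⊔ W = K ∧ zmultiples u ⊓ W = ⊥ := by
  have hcompl := isCompl_zmultiples_ker hfu
  have hf : Function.Surjective f := fun m ↦ ⟨m • u, by simp [hfu]⟩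
  refine ⟨f.ker ⊓ K, inf_le_right, ?_, ?_, ?_⟩
  · exact nonempty_addEquiv_fin_of_finrank_eq
      (Nat.add_right_cancel ((finrank_ker_inf_add_one hf K).trans hG))
  · rw [← sup_inf_assoc_of_le f.ker (zmultiples_le_of_mem huK), hcompl.sup_eq_top, top_inf_eq]
  · exact (hcompl.disjoint.mono_right inf_le_left).eq_bot

end FreeAbelian

/-- **Proposition 5.1** (rank of the twist group).  Let `(V, E, s, t, ℓ, κ)` be a
connected enhanced level graph of depth `N` (levels `{0, −1, …, −N}` encoded by
`Fin (N+1)`, index `i` standing for level `−i`, so that `min` of indices is the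
*higher* level `ℓ(e⁺)` and `max` is the *lower* level `ℓ(e⁻)`), and let
`φ : ℤ^{levels} → ∏_{e vertical} ℤ/κ_eℤ`, `φ(n)_e = n_{ℓ(e⁺)} − n_{ℓ(e⁻)} mod κ_e`,
be the level rotation homomorphism.  Then:
(i) the tuples `n` with `n_{ℓ(s e)} = n_{ℓ(t e)}` for every edge `e` are exactly the
constant tuples, i.e. the subgroup `ℤ·(1,…,1)`;
(ii) `ker φ` has finite index in `ℤ^{N+1}`;
(iii) there is a subgroup `W ≤ ker φ`, free abelian of rank `N`, with `ker φ` the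
internal direct sum of `ℤ·(1,…,1)` and `W`. -/
theorem rank_of_twist_group
    (N : ℕ) (V E : Type) [Fintype V] [Fintype E]
    (s t : E → V) (ℓ : V → Fin (N + 1)) (κ : E → ℕ)
    (hconn : ∀ v w : V, Relation.ReflTransGen
      (fun a b => ∃ e : E, s e = a ∧ t e = b ∨ s e = b ∧ t e = a) v w)
    (hsurj : Function.Surjective ℓ)
    (hκ : ∀ e : E, ℓ (s e) ≠ ℓ (t e) → 0 < κ e)
    (φ : (Fin (N + 1) → ℤ) →+ ∀ e : {e : E // ℓ (s e) ≠ ℓ (t e)}, ZMod (κ e.1))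
    (hφ : ∀ (n : Fin (N + 1) → ℤ) (e : {e : E // ℓ (s e) ≠ ℓ (t e)}),
      φ n e = ((n (min (ℓ (s e.1)) (ℓ (t e.1))) - n (max (ℓ (s e.1)) (ℓ (t e.1))) : ℤ) :
        ZMod (κ e.1))) :
    (∀ n : Fin (N + 1) → ℤ,
        (∀ e : E, n (ℓ (s e)) = n (ℓ (t e))) ↔ ∃ m : ℤ, n = fun _ => m) ∧
    φ.ker.FiniteIndex ∧
    (∃ W : AddSubgroup (Fin (N + 1) → ℤ),
      W ≤ φ.ker ∧ Nonempty (W ≃+ (Fin N → ℤ)) ∧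
      AddSubgroup.zmultiples ((fun _ => (1 : ℤ)) : Fin (N + 1) → ℤ) ⊔ W = φ.ker ∧
      AddSubgroup.zmultiples ((fun _ => (1 : ℤ)) : Fin (N + 1) → ℤ) ⊓ W = ⊥) := by
  have (e : {e : E // ℓ (s e) ≠ ℓ (t e)}) : NeZero (κ e.1) := ⟨(hκ e.1 e.2).ne'⟩
  have hker : φ.ker.FiniteIndex := finiteIndex_ker φ
  have hone : (fun _ ↦ 1) ∈ φ.ker := by
    ext e
    simp [hφ]
  exact ⟨forall_source_eq_target_iff_exists_eq_const hconn hsurj, hker,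
    exists_addEquiv_fin_compl_zmultiples (finrank_fin_fun ℤ)
      (f := Pi.evalAddMonoidHom (fun _ ↦ ℤ) 0) rfl hone⟩
end

section
/- Lemma (simple vertical twist group, Lemma 5.2). Let (V, E, s, t, ℓ, κ) be a connected enhanced level graph of depth N and φ the associated level rotation homomorphism. For −N ≤ i ≤ −1 let b_i ∈ ℤ^{{0,−1,…,−N}} be the vector with entry 1 at each level j ≤ i and entry 0 at each level j > i, and let b_0 = (1,1,…,1). Say a vertical edge e crosses level i if ℓ(e⁻) ≤ i < ℓ(e⁺), and set a_i := lcm{κ_e : e crosses level i}. Then b_0 ∈ ker φ, each vector a_i·b_i for −N ≤ i ≤ −1 lies in ker φ, and the subgroup of ℤ^{{0,−1,…,−N}} generated by b_0, a_{−1}b_{−1}, …, a_{−N}b_{−N} has finite index; in particular these N+1 vectors are ℤ-linearly independent. (This shows the simple vertical twist group is a finite-index subgroup of the vertical twist group.) -/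
/-!
Between its two ends, an edge sees the vector `b i` jump exactly when it crosses level `i`, so
`d • b i` lies in the kernel of the level rotation as soon as `d` is a common multiple of the
enhancements of these edges; no edge crosses the top level, where `d = 1` will do.  The matrix with
rows `b i` is triangular with ones on the diagonal, so nonzero multiples of the `b i` are linearly
independent, and there are as many of them as the rank of the level rotation group.
-/

theorem linearIndependent_row_of_isUpperTriangular {R n : Type*} [CommRing R] [IsDomain R]
    [LinearOrder n] [Finite n] {M : Matrix n n R} (hM : M.IsUpperTriangular)
    (hdiag : ∀ i, M i i ≠ 0) : LinearIndependent R M.row := by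
  cases nonempty_fintype n
  have hdet : M.det ≠ 0 := by
    rw [Matrix.det_of_isUpperTriangular hM]
    exact Finset.prod_ne_zero_iff.mpr fun i _ => hdiag i
  exact Matrix.linearIndependent_rows_of_det_ne_zero hdet

theorem finiteIndex_closure_range_of_linearIndependent {M ι : Type*} [AddCommGroup M]
    [Module.Free ℤ M] [Module.Finite ℤ M] [Fintype ι] {v : ι → M}
    (hv : LinearIndependent ℤ v) (hcard : Fintype.card ι = Module.finrank ℤ M) :
    (AddSubgroup.closure (Set.range v)).FiniteIndex := by
  rw [← Submodule.span_int_eq_addSubgroupClosure]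
  have : Finite (M ⧸ (Submodule.span ℤ (Set.range v)).toAddSubgroup) :=
    Submodule.finiteQuotientOfFreeOfRankEq _ ((finrank_span_eq_card hv).trans hcard)
  exact AddSubgroup.finiteIndex_of_finite_quotient

theorem ne_of_mem_uIoc {α : Type*} [LinearOrder α] {i x y : α} (hi : i ∈ Set.uIoc x y) :
    x ≠ y := by
  rintro rfl
  simp only [Set.uIoc, min_self, max_self, Set.Ioc_self, Set.mem_empty_iff_false] at hi

section LevelStep

variable {L : Type*} [LinearOrder L]

/-- The vector `b i`, with entry `1` at the levels weakly below `i` and `0` elsewhere.  As in the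
encoding of the level `-i` by `i`, the order of `L` is reversed: deeper levels are larger, and `⊥`
is the top level. -/
def levelStep (i : L) : L → ℤ := fun q => if i ≤ q then 1 else 0

theorem levelStep_self (i : L) : levelStep i i = 1 :=
  if_pos le_rfl

theorem levelStep_of_lt {i q : L} (h : q < i) : levelStep i q = 0 :=
  if_neg h.not_ge

theorem levelStep_min_eq_max {i x y : L} (h : i ∉ Set.uIoc x y) :
    levelStep i (min x y) = levelStep i (max x y) := by
  have hiff : i ≤ min x y ↔ i ≤ max x y :=
    ⟨fun hmin => hmin.trans min_le_max, fun hmax => not_lt.mp fun hmin => h ⟨hmin, hmax⟩⟩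
  simp only [levelStep, hiff]

theorem linearIndependent_smul_levelStep [Finite L] {d : L → ℤ} (hd : ∀ i, d i ≠ 0) :
    LinearIndependent ℤ fun i => d i • levelStep i := by
  refine linearIndependent_row_of_isUpperTriangular (M := .of fun i => d i • levelStep i)
    (fun i j hji => ?_) fun i => ?_
  · exact mul_eq_zero_of_right (d i) (levelStep_of_lt hji)
  · simpa only [Matrix.of_apply, Pi.smul_apply, levelStep_self, smul_eq_mul, mul_one] using hd i

theorem smul_levelStep_mem_ker {V E : Type*} {s t : E → V} {ℓ : V → L} {κ : E → ℕ}
    {φ : (L → ℤ) →+ ∀ e : {e : E // ℓ (s e) ≠ ℓ (t e)}, ZMod (κ e.1)}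
    (hφ : ∀ (n : L → ℤ) (e : {e : E // ℓ (s e) ≠ ℓ (t e)}),
      φ n e = ((n (min (ℓ (s e.1)) (ℓ (t e.1))) - n (max (ℓ (s e.1)) (ℓ (t e.1))) : ℤ) :
        ZMod (κ e.1)))
    {i : L} {d : ℤ} (hd : ∀ e, i ∈ Set.uIoc (ℓ (s e)) (ℓ (t e)) → (κ e : ℤ) ∣ d) :
    d • levelStep i ∈ φ.ker := by
  refine φ.mem_ker.mpr (funext fun e => ?_)
  simp only [hφ, Pi.smul_apply, smul_eq_mul, ← mul_sub, Pi.zero_apply]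
  rw [ZMod.intCast_zmod_eq_zero_iff_dvd]
  by_cases hcross : i ∈ Set.uIoc (ℓ (s e.1)) (ℓ (t e.1))
  · exact (hd e.1 hcross).mul_right _
  · rw [levelStep_min_eq_max hcross, sub_self, mul_zero]
    exact dvd_zero _

end LevelStep

theorem simple_vertical_twist_group_finite_index_general
    {L V E : Type*} [LinearOrder L] [OrderBot L] [Finite L]
    (s t : E → V) (ℓ : V → L) (κ : E → ℕ)
    (φ : (L → ℤ) →+ ∀ e : {e : E // ℓ (s e) ≠ ℓ (t e)}, ZMod (κ e.1))
    (hφ : ∀ (n : L → ℤ) (e : {e : E // ℓ (s e) ≠ ℓ (t e)}),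
      φ n e = ((n (min (ℓ (s e.1)) (ℓ (t e.1))) - n (max (ℓ (s e.1)) (ℓ (t e.1))) : ℤ) :
        ZMod (κ e.1)))
    (b : L → L → ℤ) (hb : ∀ i q, b i q = if i ≤ q then 1 else 0)
    (a : L → ℕ) (ha_ne : ∀ i, i ≠ ⊥ → a i ≠ 0)
    (ha_dvd : ∀ i e, i ∈ Set.uIoc (ℓ (s e)) (ℓ (t e)) → κ e ∣ a i)
    (c : L → L → ℤ) (hc_bot : c ⊥ = b ⊥) (hc : ∀ i, i ≠ ⊥ → c i = (a i : ℤ) • b i) :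
    b ⊥ ∈ φ.ker ∧
    (∀ i, i ≠ ⊥ → (a i : ℤ) • b i ∈ φ.ker) ∧
    (AddSubgroup.closure (Set.range c)).FiniteIndex ∧
    LinearIndependent ℤ c := by
  cases nonempty_fintype L
  obtain rfl : b = levelStep := funext₂ hb
  have hbot : levelStep ⊥ ∈ φ.ker := one_zsmul (levelStep (⊥ : L)) ▸
    smul_levelStep_mem_ker hφ fun _ hcross => absurd hcross.1 not_lt_bot
  have hker (i : L) : (a i : ℤ) • levelStep i ∈ φ.ker :=
    smul_levelStep_mem_ker hφ fun e hcross => Int.natCast_dvd_natCast.mpr (ha_dvd i e hcross)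
  have hli : LinearIndependent ℤ c := by
    let d : L → ℤ := fun i => if i = ⊥ then 1 else a i
    have hd (i : L) : d i ≠ 0 := by
      by_cases hi : i = ⊥
      · simp only [d, if_pos hi, ne_eq, one_ne_zero, not_false_eq_true]
      · simpa only [d, if_neg hi, Nat.cast_ne_zero] using ha_ne i hi
    have hcd : c = fun i => d i • levelStep i := by
      funext i
      obtain rfl | hi := eq_or_ne i ⊥
      · simp only [d, hc_bot, if_true, one_smul]
      · simp only [d, hc i hi, if_neg hi]
    exact hcd ▸ linearIndependent_smul_levelStep hd
  exact ⟨hbot, fun i _ => hker i,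
    finiteIndex_closure_range_of_linearIndependent hli (Module.finrank_pi ℤ).symm, hli⟩

/-- **Lemma 5.2** (simple vertical twist group).  Let `(V, E, s, t, ℓ, κ)` be a
connected enhanced level graph of depth `N` (levels `{0, −1, …, −N}` encoded by
`Fin (N+1)`, index `i` standing for level `−i`), with level rotation homomorphism `φ`.
For each `i` let `b_i` be the vector with entry `1` at each level `j ≤ i` (i.e. at each
index `q ≥ i`) and `0` elsewhere, so `b_0 = (1,…,1)`.  A vertical edge `e` crosses
level `i` if `ℓ(e⁻) ≤ i < ℓ(e⁺)` (in indices: `min < i ≤ max`), and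
`a_i = lcm {κ_e : e crosses level i}`.  Then `b_0 ∈ ker φ`, each `a_i • b_i ∈ ker φ`
for `i ≤ −1`, and the subgroup generated by `b_0, a_{−1}b_{−1}, …, a_{−N}b_{−N}` has
finite index; in particular these `N+1` vectors are `ℤ`-linearly independent. -/
theorem simple_vertical_twist_group_finite_index
    (N : ℕ) (V E : Type) [Fintype V] [Fintype E]
    (s t : E → V) (ℓ : V → Fin (N + 1)) (κ : E → ℕ)
    (hconn : ∀ v w : V, Relation.ReflTransGen
      (fun a b => ∃ e : E, s e = a ∧ t e = b ∨ s e = b ∧ t e = a) v w)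
    (hsurj : Function.Surjective ℓ)
    (hκ : ∀ e : E, ℓ (s e) ≠ ℓ (t e) → 0 < κ e)
    (φ : (Fin (N + 1) → ℤ) →+ ∀ e : {e : E // ℓ (s e) ≠ ℓ (t e)}, ZMod (κ e.1))
    (hφ : ∀ (n : Fin (N + 1) → ℤ) (e : {e : E // ℓ (s e) ≠ ℓ (t e)}),
      φ n e = ((n (min (ℓ (s e.1)) (ℓ (t e.1))) - n (max (ℓ (s e.1)) (ℓ (t e.1))) : ℤ) :
        ZMod (κ e.1)))
    (b : Fin (N + 1) → Fin (N + 1) → ℤ)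
    (hb : ∀ i q : Fin (N + 1), b i q = if i ≤ q then 1 else 0)
    (a : Fin (N + 1) → ℕ)
    (ha : ∀ i : Fin (N + 1), a i = Finset.lcm
      (Finset.univ.filter (fun e : E =>
        min (ℓ (s e)) (ℓ (t e)) < i ∧ i ≤ max (ℓ (s e)) (ℓ (t e)))) κ)
    (c : Fin (N + 1) → Fin (N + 1) → ℤ)
    (hc0 : c 0 = b 0)
    (hc : ∀ i : Fin (N + 1), i ≠ 0 → c i = (a i : ℤ) • b i) :
    b 0 ∈ φ.ker ∧
    (∀ i : Fin (N + 1), i ≠ 0 → (a i : ℤ) • b i ∈ φ.ker) ∧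
    (AddSubgroup.closure (Set.range c)).FiniteIndex ∧
    LinearIndependent ℤ c :=
  simple_vertical_twist_group_finite_index_general s t ℓ κ φ hφ b hb a
    (fun i _ => ha i ▸ Finset.lcm_ne_zero_iff.mpr fun e he =>
      (hκ e (ne_of_mem_uIoc (Finset.mem_filter.mp he).2)).ne')
    (fun i e he => ha i ▸ Finset.dvd_lcm (Finset.mem_filter.mpr ⟨Finset.mem_univ e, he⟩))
    c hc0 hc
end

section
/- Proposition (characterization of the level rotation torus, Prop. 5.3). Let (V, E, s, t, ℓ, κ) be a connected enhanced level graph of depth N, and let L, I(e), S and Ψ be as defined in the context. Then: (i) Ψ is a group homomorphism taking values in S, i.e. ∏_{k∈I(e)}exp(2πi d_k) = (exp(2πi(∑_{k∈I(e)} d_k)/κ_e))^{κ_e} for every vertical edge e and every d ∈ ℂ^L; (ii) Ψ(d) is the identity of S if and only if every coordinate d_k is an integer and κ_e divides ∑_{k∈I(e)} d_k for every vertical edge e; (iii) the range of Ψ is exactly the connected component of the identity element in S (with the subspace topology induced from (ℂ*)^L × (ℂ*)^{E_v}). -/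
/-!
Both coordinates of `Ψ` are characters `d ↦ exp (2πi · λ(d))` with `λ` linear, which gives the
homomorphism property and the kernel.  Since `ℂ^L` is connected, the range of `Ψ` is a connected
subgroup of `S`, so it is the identity component as soon as it is a neighbourhood of `1`.
Near `1` the point `(r, ρ) ∈ S` is determined by `r`: two choices of `ρ_e` differ by a `κ_e`-th root
of unity, and `1` is isolated among these.  The logarithm of `r` provides a continuous choice of
`d` with `Ψ d` lying over `r`, hence `Ψ d = (r, ρ)` near `1`.
-/

open Filter Topology

theorem range_addChar_eq_connectedComponent_one {A G : Type*} [AddGroup A] [TopologicalSpace A]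
    [PreconnectedSpace A] [Group G] [TopologicalSpace G] [ContinuousMul G] {f : AddChar A G}
    (hf : Continuous f) (hnhds : Set.range f ∈ 𝓝 (1 : G)) :
    Set.range f = connectedComponent (1 : G) := by
  have hrange : (f.toMonoidHom.range : Set G) = Set.range f := MonoidHom.coe_range _
  have hopen : IsOpen (f.toMonoidHom.range : Set G) :=
    Subgroup.isOpen_of_mem_nhds _ (hrange ▸ hnhds)
  have hclopen : IsClopen (f.toMonoidHom.range : Set G) :=
    ⟨Subgroup.isClosed_of_isOpen _ hopen, hopen⟩
  refine Set.Subset.antisymm ?_ (hrange ▸ hclopen.connectedComponent_subset (one_mem _))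
  exact (isPreconnected_range hf).subset_connectedComponent ⟨0, f.map_zero_eq_one⟩

theorem eventually_eq_one_of_pow_eq_one {G : Type*} [Monoid G] [TopologicalSpace G] [T1Space G]
    {n : ℕ} (hfin : {z : G | z ^ n = 1}.Finite) : ∀ᶠ z in 𝓝 (1 : G), z ^ n = 1 → z = 1 := by
  have hclosed : IsClosed ({z : G | z ^ n = 1} \ {1}) := hfin.sdiff.isClosed
  filter_upwards [hclosed.isOpen_compl.mem_nhds (by simp)] with z hz hpow
  by_contra hne
  exact hz ⟨hpow, hne⟩

theorem addChar_map_sum_eq_prod {ι A M : Type*} [AddCommMonoid A] [CommMonoid M]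
    (f : AddChar A M) (s : Finset ι) (g : ι → A) : f (∑ i ∈ s, g i) = ∏ i ∈ s, f (g i) :=
  map_prod f.toMonoidHom (fun i => Multiplicative.ofAdd (g i)) s

/-- The character `z ↦ exp (2πi z)` of `ℂ` with values in `ℂ*`, bundled so that the lemmas on
additive characters turn sums into products. -/
noncomputable def expTwoPiI : AddChar ℂ ℂˣ where
  toFun z := Units.mk0 (Complex.exp (2 * Real.pi * Complex.I * z)) (Complex.exp_ne_zero _)
  map_zero_eq_one' := by ext; simp
  map_add_eq_mul' z w := by ext; simp [mul_add, Complex.exp_add]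

theorem coe_expTwoPiI (z : ℂ) :
    (expTwoPiI z : ℂ) = Complex.exp (2 * Real.pi * Complex.I * z) := rfl

theorem expTwoPiI_eq_one_iff {z : ℂ} : expTwoPiI z = 1 ↔ ∃ m : ℤ, z = m := by
  rw [← Units.val_inj, coe_expTwoPiI, Units.val_one, Complex.exp_eq_one_iff]
  simp only [mul_comm _ z, mul_left_inj' Complex.two_pi_I_ne_zero]

theorem continuous_expTwoPiI : Continuous expTwoPiI := by
  refine Units.isEmbedding_val₀.continuous_iff.2 ?_
  simp only [Function.comp_def, coe_expTwoPiI]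
  fun_prop

/-- The branch of the inverse of `expTwoPiI` given by the principal logarithm. -/
noncomputable def logTwoPiI (u : ℂˣ) : ℂ :=
  Complex.log u / (2 * Real.pi * Complex.I)

theorem expTwoPiI_logTwoPiI (u : ℂˣ) : expTwoPiI (logTwoPiI u) = u := by
  ext
  rw [coe_expTwoPiI, logTwoPiI, mul_div_cancel₀ _ Complex.two_pi_I_ne_zero,
    Complex.exp_log u.ne_zero]

theorem tendsto_logTwoPiI_one : Tendsto logTwoPiI (𝓝 1) (𝓝 0) := by
  have hcont : ContinuousAt logTwoPiI 1 :=
    (Units.continuous_val.continuousAt.clog (by simp)).div_const _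
  simpa [logTwoPiI] using hcont.tendsto

theorem finite_setOf_units_pow_eq_one {R : Type*} [CommRing R] [IsDomain R] {n : ℕ} (hn : n ≠ 0) :
    {z : Rˣ | z ^ n = 1}.Finite := by
  have : NeZero n := ⟨hn⟩
  exact Set.finite_coe_iff.1 (inferInstanceAs (Finite (rootsOfUnity n R)))

section LevelRotation

variable {K E : Type*} {I : E → Finset K} {κ : E → ℕ}

/-- The group `S` attached to finite index sets `I e ⊆ K` and exponents `κ e`: pairs `(r, ρ)`
with `∏_{k ∈ I e} r_k = ρ_e ^ κ_e` for all `e`.  For a level graph, `K` is the set of levels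
below `0` and `E` that of vertical edges. -/
def rootCover (G : Type*) [CommGroup G] (I : E → Finset K) (κ : E → ℕ) :
    Subgroup ((K → G) × (E → G)) where
  carrier := {p | ∀ e, ∏ k ∈ I e, p.1 k = p.2 e ^ κ e}
  one_mem' := by simp
  mul_mem' hp hq e := by simp [Finset.prod_mul_distrib, mul_pow, hp e, hq e]
  inv_mem' hp e := by simp [hp e]

theorem mem_rootCover {G : Type*} [CommGroup G] {p : (K → G) × (E → G)} :
    p ∈ rootCover G I κ ↔ ∀ e, ∏ k ∈ I e, p.1 k = p.2 e ^ κ e := Iff.rfl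

theorem rootCover.eventually_eq_one_of_fst_eq_one {G : Type*} [CommGroup G] [TopologicalSpace G]
    [T1Space G] [Finite E] (hfin : ∀ e, {z : G | z ^ κ e = 1}.Finite) :
    ∀ᶠ p in 𝓝 (1 : rootCover G I κ), p.1.1 = 1 → p = 1 := by
  have hcoord (e : E) : Continuous fun p : rootCover G I κ => p.1.2 e := by fun_prop
  have hroot : ∀ᶠ p in 𝓝 (1 : rootCover G I κ), ∀ e, p.1.2 e ^ κ e = 1 → p.1.2 e = 1 :=
    eventually_all.2 fun e =>
      (hcoord e).tendsto 1 |>.eventually (eventually_eq_one_of_pow_eq_one (hfin e))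
  filter_upwards [hroot] with p hp hfst
  refine Subtype.ext (Prod.ext hfst (funext fun e => hp e ?_))
  rw [← mem_rootCover.1 p.2 e, hfst]
  exact Finset.prod_const_one

theorem expTwoPiI_mem_rootCover (hκ : ∀ e, κ e ≠ 0) (d : K → ℂ) :
    (fun k => expTwoPiI (d k), fun e => expTwoPiI ((∑ k ∈ I e, d k) / κ e)) ∈
      rootCover ℂˣ I κ := by
  refine mem_rootCover.2 fun e => ?_
  calc ∏ k ∈ I e, expTwoPiI (d k) = expTwoPiI (∑ k ∈ I e, d k) :=
        (addChar_map_sum_eq_prod _ _ _).symm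
    _ = expTwoPiI (κ e • ((∑ k ∈ I e, d k) / κ e)) := by
        rw [nsmul_eq_mul, mul_div_cancel₀ _ (Nat.cast_ne_zero.2 (hκ e))]
    _ = expTwoPiI ((∑ k ∈ I e, d k) / κ e) ^ κ e := AddChar.map_nsmul_eq_pow _ _ _

/-- The homomorphism `Ψ`, as an additive character of `ℂ^K` with values in the group `S`. -/
noncomputable def levelRotation (I : E → Finset K) (hκ : ∀ e, κ e ≠ 0) :
    AddChar (K → ℂ) (rootCover ℂˣ I κ) where
  toFun d := ⟨_, expTwoPiI_mem_rootCover hκ d⟩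
  map_zero_eq_one' := by
    ext <;> simp
  map_add_eq_mul' d d' := by
    ext <;> simp [Finset.sum_add_distrib, add_div, AddChar.map_add_eq_mul]

theorem coe_levelRotation (hκ : ∀ e, κ e ≠ 0) (d : K → ℂ) :
    (levelRotation I hκ d : (K → ℂˣ) × (E → ℂˣ)) =
      (fun k => expTwoPiI (d k), fun e => expTwoPiI ((∑ k ∈ I e, d k) / κ e)) := rfl

theorem levelRotation_eq_one_iff (hκ : ∀ e, κ e ≠ 0) {d : K → ℂ} :
    levelRotation I hκ d = 1 ↔
      (∀ k, ∃ m : ℤ, d k = m) ∧ ∀ e, ∃ m : ℤ, ∑ k ∈ I e, d k = κ e * m := by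
  have hdiv (e : E) (m : ℤ) : (∑ k ∈ I e, d k) / κ e = m ↔ ∑ k ∈ I e, d k = κ e * m := by
    rw [div_eq_iff (Nat.cast_ne_zero.2 (hκ e)), mul_comm]
  rw [← OneMemClass.coe_eq_one, coe_levelRotation, Prod.mk_eq_one]
  simp only [funext_iff, Pi.one_apply, expTwoPiI_eq_one_iff, hdiv]

theorem continuous_levelRotation (hκ : ∀ e, κ e ≠ 0) : Continuous (levelRotation I hκ) := by
  refine Continuous.subtype_mk (.prodMk ?_ ?_) _ <;>
    exact continuous_pi fun _ => continuous_expTwoPiI.comp (by fun_prop)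

theorem eventually_levelRotation_log_eq [Finite E] (hκ : ∀ e, κ e ≠ 0) :
    ∀ᶠ p in 𝓝 (1 : rootCover ℂˣ I κ),
      levelRotation I hκ (fun k => logTwoPiI (p.1.1 k)) = p := by
  have hlog : Tendsto (fun (p : rootCover ℂˣ I κ) k => logTwoPiI (p.1.1 k)) (𝓝 1) (𝓝 0) :=
    tendsto_pi_nhds.2 fun k => tendsto_logTwoPiI_one.comp <|
      Continuous.tendsto' (f := fun p : rootCover ℂˣ I κ => p.1.1 k) (by fun_prop) 1 1 rfl
  have hrotation : Tendsto (levelRotation I hκ) (𝓝 0) (𝓝 1) :=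
    (continuous_levelRotation hκ).tendsto' 0 1 (AddChar.map_zero_eq_one _)
  have hquot :
      Tendsto (fun p => levelRotation I hκ (fun k => logTwoPiI (p.1.1 k)) / p) (𝓝 1) (𝓝 1) := by
    simpa using (hrotation.comp hlog).div' tendsto_id
  have hinj := hquot.eventually (rootCover.eventually_eq_one_of_fst_eq_one
    fun e => finite_setOf_units_pow_eq_one (hκ e))
  filter_upwards [hinj] with p hp
  refine div_eq_one.1 (hp (funext fun k => ?_))
  simp [coe_levelRotation, expTwoPiI_logTwoPiI]

theorem range_levelRotation_eq_connectedComponent_one [Finite E] (hκ : ∀ e, κ e ≠ 0) :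
    Set.range (levelRotation I hκ) = connectedComponent 1 :=
  range_addChar_eq_connectedComponent_one (continuous_levelRotation hκ) <|
    (eventually_levelRotation_log_eq hκ).mono fun _ hp => ⟨_, hp⟩

end LevelRotation

theorem level_rotation_torus_characterization_general {K E : Type*} [Finite E]
    (I : E → Finset K) (κ : E → ℕ) (hκ : ∀ e, κ e ≠ 0)
    (S : Subgroup ((K → ℂˣ) × (E → ℂˣ)))
    (hS : ∀ p : (K → ℂˣ) × (E → ℂˣ), p ∈ S ↔ ∀ e, (∏ k ∈ I e, p.1 k) = p.2 e ^ κ e)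
    (Ψ : (K → ℂ) → (K → ℂˣ) × (E → ℂˣ))
    (hΨ : ∀ d : K → ℂ, Ψ d =
      (fun k => Units.mk0 (Complex.exp (((2 * Real.pi : ℝ) : ℂ) * Complex.I * d k))
        (Complex.exp_ne_zero _),
       fun e => Units.mk0 (Complex.exp (((2 * Real.pi : ℝ) : ℂ) * Complex.I *
          (∑ k ∈ I e, d k) / (κ e : ℂ))) (Complex.exp_ne_zero _))) :
    (∀ d, Ψ d ∈ S) ∧
    (∀ d d', Ψ (d + d') = Ψ d * Ψ d') ∧
    (∀ d, Ψ d = 1 ↔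
      (∀ k, ∃ m : ℤ, d k = m) ∧ ∀ e, ∃ m : ℤ, ∑ k ∈ I e, d k = κ e * m) ∧
    Set.range Ψ = Subtype.val '' connectedComponent (1 : S) := by
  obtain rfl : S = rootCover ℂˣ I κ := Subgroup.ext hS
  obtain rfl : Ψ = Subtype.val ∘ levelRotation I hκ := by
    ext d <;> simp [hΨ, coe_levelRotation, coe_expTwoPiI, mul_div_assoc]
  refine ⟨fun d => (levelRotation I hκ d).2, fun d d' => ?_, fun d => ?_, ?_⟩
  · exact congrArg Subtype.val (AddChar.map_add_eq_mul _ d d')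
  · exact OneMemClass.coe_eq_one.trans (levelRotation_eq_one_iff hκ)
  · rw [Set.range_comp, range_levelRotation_eq_connectedComponent_one]

/-- **Proposition 5.3** (characterization of the level rotation torus).  Let
`(V, E, s, t, ℓ, κ)` be a connected enhanced level graph of depth `N` (levels
`{0, −1, …, −N}` encoded by `Fin (N+1)`, index `i` standing for level `−i`).  The set
of levels below `0`, `L = {−1, …, −N}`, is encoded by `Fin N` with index `m` standing
for level `−(m+1)`; for a vertical edge `e` the interval
`I(e) = {k ∈ L : ℓ(e⁻) ≤ k ≤ ℓ(e⁺) − 1}` then corresponds to the indices `m` with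
`min (ℓ(s e)) (ℓ(t e)) ≤ m` and `m + 1 ≤ max (ℓ(s e)) (ℓ(t e))`.  Let `S` be the
subgroup of `(ℂ*)^L × (ℂ*)^{E_v}` of pairs `(r, ρ)` with `∏_{k∈I(e)} r_k = ρ_e^{κ_e}`
for every vertical edge `e`, and let `Ψ(d) = ((exp(2πi d_k))_k,
(exp(2πi (∑_{k∈I(e)} d_k)/κ_e))_e)`.  Then: (i) `Ψ` is a group homomorphism taking
values in `S`; (ii) `Ψ d = 1` iff every `d_k` is an integer and `κ_e` divides
`∑_{k∈I(e)} d_k` for every vertical edge `e`; (iii) the range of `Ψ` is exactly the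
connected component of the identity in `S` (with the subspace topology). -/
theorem level_rotation_torus_characterization
    (N : ℕ) (V E : Type) [Fintype V] [Fintype E]
    (s t : E → V) (ℓ : V → Fin (N + 1)) (κ : E → ℕ)
    (hconn : ∀ v w : V, Relation.ReflTransGen
      (fun a b => ∃ e : E, s e = a ∧ t e = b ∨ s e = b ∧ t e = a) v w)
    (hsurj : Function.Surjective ℓ)
    (hκ : ∀ e : E, ℓ (s e) ≠ ℓ (t e) → 0 < κ e)
    (I : {e : E // ℓ (s e) ≠ ℓ (t e)} → Finset (Fin N))
    (hI : ∀ (e : {e : E // ℓ (s e) ≠ ℓ (t e)}) (m : Fin N),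
      m ∈ I e ↔ ((min (ℓ (s e.1)) (ℓ (t e.1))) : ℕ) ≤ (m : ℕ) ∧
        (m : ℕ) + 1 ≤ ((max (ℓ (s e.1)) (ℓ (t e.1))) : ℕ))
    (S : Subgroup ((Fin N → ℂˣ) × ({e : E // ℓ (s e) ≠ ℓ (t e)} → ℂˣ)))
    (hS : ∀ p : (Fin N → ℂˣ) × ({e : E // ℓ (s e) ≠ ℓ (t e)} → ℂˣ),
      p ∈ S ↔ ∀ e : {e : E // ℓ (s e) ≠ ℓ (t e)},
        (∏ k ∈ I e, p.1 k) = p.2 e ^ κ e.1)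
    (Ψ : (Fin N → ℂ) → (Fin N → ℂˣ) × ({e : E // ℓ (s e) ≠ ℓ (t e)} → ℂˣ))
    (hΨ : ∀ d : Fin N → ℂ, Ψ d =
      (fun k => Units.mk0 (Complex.exp (((2 * Real.pi : ℝ) : ℂ) * Complex.I * d k))
        (Complex.exp_ne_zero _),
       fun e => Units.mk0 (Complex.exp (((2 * Real.pi : ℝ) : ℂ) * Complex.I *
          (∑ k ∈ I e, d k) / (κ e.1 : ℂ))) (Complex.exp_ne_zero _))) :
    (∀ d : Fin N → ℂ, Ψ d ∈ S) ∧
    (∀ d d' : Fin N → ℂ, Ψ (d + d') = Ψ d * Ψ d') ∧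
    (∀ d : Fin N → ℂ, Ψ d = 1 ↔
      ((∀ k : Fin N, ∃ m : ℤ, d k = (m : ℂ)) ∧
       (∀ e : {e : E // ℓ (s e) ≠ ℓ (t e)}, ∃ m : ℤ,
          (∑ k ∈ I e, d k) = (κ e.1 : ℂ) * (m : ℂ)))) ∧
    Set.range Ψ = Subtype.val '' connectedComponent (1 : S) :=
  level_rotation_torus_characterization_general I (fun e => κ e.1)
    (fun e => (hκ e.1 e.2).ne') S hS Ψ hΨ
end

section
/- Lemma (holomorphy of partial application into the Banach space of bounded functions, Lemma 4.6). Let E and F be complex Banach spaces, U ⊆ E and V ⊆ F open sets, M ≥ 0, and let f : U × V → ℂ be holomorphic with |f(z,w)| ≤ M for all (z,w) ∈ U × V. Then for each z ∈ U the function w ↦ f(z,w) is a bounded continuous function on V, the induced map G : U → (V →ᵇ ℂ) defined by G(z)(w) = f(z,w) is holomorphic on U, and its Fréchet derivative satisfies (DG_z(h))(w) = D₁f_{(z,w)}(h) for every z ∈ U, h ∈ E and w ∈ V, where D₁f_{(z,w)} denotes the partial Fréchet derivative of f in the first variable at (z,w). -/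
/-! Subtracting its first-order Taylor polynomial from a bounded holomorphic function leaves a
function vanishing to second order, so the higher-order Schwarz lemma bounds the remainder
quadratically, with a constant depending only on the radius of a ball and on the bound. For a
uniformly bounded family of holomorphic functions the difference quotients therefore converge
uniformly in the parameter. Hence the derivative of the family is continuous in the parameter, and
the family is differentiable for the supremum norm. -/

open Set Metric Filter Topology Asymptotics BoundedContinuousFunction

section UniformDifferentiability

variable {𝕜 E W X : Type*} [NontriviallyNormedField 𝕜] [NormedAddCommGroup E] [NormedSpace 𝕜 E]
  [NormedAddCommGroup W] [NormedSpace 𝕜 W]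

/-- The functions `f · x` are differentiable at `z` with derivatives `L x`, uniformly in the
parameter `x`. The parameter comes second so that `f` may be read as a map into a space of
functions on `X`. -/
def HasFDerivAtUniformly (f : E → X → W) (L : X → E →L[𝕜] W) (z : E) : Prop :=
  ∀ ε > 0, ∀ᶠ y in 𝓝 z, ∀ x, ‖f y x - f z x - L x (y - z)‖ ≤ ε * ‖y - z‖

theorem tendsto_add_smul_nhdsNE_zero (z h : E) :
    Tendsto (fun t : 𝕜 => z + t • h) (𝓝[≠] 0) (𝓝 z) := by
  have hcont : Continuous fun t : 𝕜 => z + t • h := by fun_prop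
  simpa using (hcont.tendsto 0).mono_left nhdsWithin_le_nhds

namespace HasFDerivAtUniformly

variable {f : E → X → W} {L : X → E →L[𝕜] W} {z : E}

theorem tendstoUniformly_slope (hf : HasFDerivAtUniformly f L z) (h : E) :
    TendstoUniformly (fun (t : 𝕜) x => t⁻¹ • (f (z + t • h) x - f z x)) (fun x => L x h)
      (𝓝[≠] 0) := by
  rw [Metric.tendstoUniformly_iff]
  intro ε hε
  obtain ⟨δ, hδ, hδε⟩ : ∃ δ > 0, ‖h‖ * δ < ε := exists_pos_mul_lt hε ‖h‖
  filter_upwards [(tendsto_add_smul_nhdsNE_zero z h).eventually (hf δ hδ), self_mem_nhdsWithin]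
    with t hremainder (ht : t ≠ 0) x
  have hfactor : t⁻¹ • (f (z + t • h) x - f z x) - L x h =
      t⁻¹ • (f (z + t • h) x - f z x - L x (z + t • h - z)) := by
    rw [add_sub_cancel_left, map_smul, smul_sub _ _ (t • L x h), inv_smul_smul₀ ht]
  rw [dist_comm, dist_eq_norm, hfactor, norm_smul, norm_inv]
  calc ‖t‖⁻¹ * ‖f (z + t • h) x - f z x - L x (z + t • h - z)‖
      ≤ ‖t‖⁻¹ * (δ * ‖z + t • h - z‖) := by gcongr; exact hremainder x
    _ = ‖h‖ * δ := by
        have : ‖t‖ ≠ 0 := norm_ne_zero_iff.mpr ht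
        rw [add_sub_cancel_left, norm_smul]
        field_simp
    _ < ε := hδε

theorem continuous_apply [TopologicalSpace X] (hf : HasFDerivAtUniformly f L z)
    (hcont : ∀ᶠ y in 𝓝 z, Continuous (f y)) (h : E) : Continuous fun x => L x h := by
  refine (hf.tendstoUniformly_slope h).continuous (Eventually.frequently ?_)
  filter_upwards [(tendsto_add_smul_nhdsNE_zero z h).eventually hcont] with t ht
  exact (ht.sub hcont.self_of_nhds).const_smul _

end HasFDerivAtUniformly

variable [TopologicalSpace X]

/-- A strongly continuous, uniformly bounded family of continuous linear maps `L x`, regarded as a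
single continuous linear map into the space of bounded continuous functions of `x`. -/
noncomputable def boundedFamilyCLM (L : X → E →L[𝕜] W) (hcont : ∀ h, Continuous fun x => L x h)
    (hbdd : BddAbove (range fun x => ‖L x‖)) : E →L[𝕜] X →ᵇ W :=
  have hle (h : E) (x : X) : ‖L x h‖ ≤ (⨆ x, ‖L x‖) * ‖h‖ :=
    (L x).le_of_opNorm_le (le_ciSup hbdd x) h
  LinearMap.mkContinuous
    { toFun := fun h => ofNormedAddCommGroup (fun x => L x h) (hcont h) _ (hle h)
      map_add' := fun _ _ => by ext; simp
      map_smul' := fun _ _ => by ext; simp }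
    (⨆ x, ‖L x‖)
    fun h => norm_ofNormedAddCommGroup_le (hcont h)
      (mul_nonneg (Real.iSup_nonneg fun _ => norm_nonneg _) (norm_nonneg h)) (hle h)

@[simp]
theorem boundedFamilyCLM_apply (L : X → E →L[𝕜] W) (hcont : ∀ h, Continuous fun x => L x h)
    (hbdd : BddAbove (range fun x => ‖L x‖)) (h : E) (x : X) :
    boundedFamilyCLM L hcont hbdd h x = L x h :=
  rfl

theorem HasFDerivAtUniformly.hasFDerivAt {G : E → X →ᵇ W} {L : X → E →L[𝕜] W} {z : E}
    (hG : HasFDerivAtUniformly (fun y => G y) L z) (hbdd : BddAbove (range fun x => ‖L x‖)) :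
    HasFDerivAt G
      (boundedFamilyCLM L (hG.continuous_apply (.of_forall fun y => (G y).continuous)) hbdd) z := by
  rw [hasFDerivAt_iff_isLittleO, isLittleO_iff]
  intro ε hε
  filter_upwards [hG ε hε] with y hy
  refine (norm_le (by positivity)).mpr fun x => ?_
  simpa only [coe_sub, Pi.sub_apply, boundedFamilyCLM_apply] using hy x

theorem fderiv_boundedContinuousFunction_apply {G : E → X →ᵇ W} {z : E}
    (hG : DifferentiableAt 𝕜 G z) (h : E) (x : X) :
    fderiv 𝕜 G z h x = fderiv 𝕜 (fun y => G y x) z h := by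
  have heval : HasFDerivAt (fun y => G y x) ((evalCLM 𝕜 x).comp (fderiv 𝕜 G z)) z :=
    (evalCLM 𝕜 x : (X →ᵇ W) →L[𝕜] W).hasFDerivAt.comp z hG.hasFDerivAt
  rw [heval.fderiv]
  rfl

end UniformDifferentiability

section Holomorphic

variable {E W X : Type*} [NormedAddCommGroup E] [NormedSpace ℂ E]
  [NormedAddCommGroup W] [NormedSpace ℂ W]

theorem norm_sub_sub_fderiv_le_of_mapsTo_ball {g : E → W} {c : E} {R M : ℝ}
    (hd : DifferentiableOn ℂ g (ball c R)) (hmaps : MapsTo g (ball c R) (closedBall (g c) M))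
    {y : E} (hy : y ∈ ball c R) :
    ‖g y - g c - fderiv ℂ g c (y - c)‖ ≤ 2 * M * (‖y - c‖ / R) ^ 2 := by
  have hR : 0 < R := pos_of_mem_ball hy
  let remainder : E → W := fun x => g x - g c - fderiv ℂ g c (x - c)
  have hcenter : remainder c = 0 := by simp [remainder]
  have hdiff : DifferentiableOn ℂ remainder (ball c R) :=
    (hd.sub_const _).sub (by fun_prop)
  have hremainder : MapsTo remainder (ball c R) (closedBall (remainder c) (2 * M)) := by
    intro x hx
    have hlinear : ‖fderiv ℂ g c (x - c)‖ ≤ M / R * R :=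
      (fderiv ℂ g c).le_of_opNorm_le_of_le
        (Complex.norm_fderiv_le_div_of_mapsTo_ball hd hmaps hR) (mem_ball_iff_norm.mp hx).le
    rw [div_mul_cancel₀ _ hR.ne'] at hlinear
    rw [hcenter, mem_closedBall_zero_iff]
    linarith [norm_sub_le (g x - g c) (fderiv ℂ g c (x - c)),
      mem_closedBall_iff_norm.mp (hmaps hx)]
  have hlittleO : (remainder · - remainder c) =o[𝓝 c] fun x => ‖x - c‖ ^ 1 := by
    simpa only [hcenter, sub_zero, pow_one] using
      (hd.differentiableAt (ball_mem_nhds c hR)).hasFDerivAt.isLittleO.norm_right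
  calc ‖remainder y‖
      = dist (remainder y) (remainder c) := by rw [hcenter, dist_zero_right]
    _ ≤ 2 * M * (dist y c / R) ^ 2 :=
        Complex.dist_le_mul_div_pow_of_mapsTo_ball_of_isLittleO hdiff hremainder hlittleO hy
    _ = 2 * M * (‖y - c‖ / R) ^ 2 := by rw [dist_eq_norm]

theorem hasFDerivAtUniformly_of_mapsTo_ball {f : E → X → W} {z : E} {R M : ℝ} (hR : 0 < R)
    (hd : ∀ x, DifferentiableOn ℂ (fun y => f y x) (ball z R))
    (hmaps : ∀ x, MapsTo (fun y => f y x) (ball z R) (closedBall (f z x) M)) :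
    HasFDerivAtUniformly f (fun x => fderiv ℂ (fun y => f y x) z) z := by
  intro ε hε
  have hsmall : ∀ᶠ y in 𝓝 z, 2 * M / R ^ 2 * ‖y - z‖ < ε :=
    ContinuousAt.eventually_lt (by fun_prop) continuousAt_const (by simpa using hε)
  filter_upwards [ball_mem_nhds z hR, hsmall] with y hy hyε x
  calc ‖f y x - f z x - fderiv ℂ (fun y => f y x) z (y - z)‖
      ≤ 2 * M * (‖y - z‖ / R) ^ 2 := norm_sub_sub_fderiv_le_of_mapsTo_ball (hd x) (hmaps x) hy
    _ = 2 * M / R ^ 2 * ‖y - z‖ * ‖y - z‖ := by ring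
    _ ≤ ε * ‖y - z‖ := by gcongr

theorem differentiableOn_boundedContinuousFunction [TopologicalSpace X] {G : E → X →ᵇ W}
    {U : Set E} (hU : IsOpen U) (hd : ∀ x, DifferentiableOn ℂ (fun y => G y x) U)
    (hbound : ∀ z ∈ U, ∃ M, ∀ᶠ y in 𝓝 z, ∀ x, ‖G y x‖ ≤ M) : DifferentiableOn ℂ G U := by
  intro z hz
  obtain ⟨M, hM⟩ := hbound z hz
  obtain ⟨R, hR, hball⟩ := eventually_nhds_iff_ball.mp (hM.and (hU.eventually_mem hz))
  have hdball (x : X) : DifferentiableOn ℂ (fun y => G y x) (ball z R) :=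
    (hd x).mono fun y hy => (hball y hy).2
  have hmaps (x : X) : MapsTo (fun y => G y x) (ball z R) (closedBall (G z x) (M + M)) :=
    fun y hy => mem_closedBall_iff_norm.mpr
      (norm_sub_le_of_le ((hball y hy).1 x) (hM.self_of_nhds x))
  have hbdd : BddAbove (range fun x => ‖fderiv ℂ (fun y => G y x) z‖) :=
    ⟨(M + M) / R, forall_mem_range.mpr fun x =>
      Complex.norm_fderiv_le_div_of_mapsTo_ball (hdball x) (hmaps x) hR⟩
  exact ((hasFDerivAtUniformly_of_mapsTo_ball hR hdball hmaps).hasFDerivAt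
    hbdd).differentiableAt.differentiableWithinAt

theorem holomorphic_into_boundedContinuousFunctions_general [TopologicalSpace X]
    {f : E → X → W} {U : Set E} (hU : IsOpen U) (hd : ∀ x, DifferentiableOn ℂ (fun z => f z x) U)
    (hcont : ∀ z ∈ U, Continuous (f z))
    (hbound : ∀ z ∈ U, ∃ M, ∀ᶠ y in 𝓝 z, ∀ x, ‖f y x‖ ≤ M) :
    ∃ G : E → X →ᵇ W, (∀ z ∈ U, ∀ x, G z x = f z x) ∧ DifferentiableOn ℂ G U ∧
      ∀ z ∈ U, ∀ h x, fderiv ℂ G z h x = fderiv ℂ (fun y => f y x) z h := by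
  have hlift : ∀ z ∈ U, ∃ g : X →ᵇ W, ∀ x, g x = f z x := fun z hz =>
    let ⟨M, hM⟩ := hbound z hz
    ⟨ofNormedAddCommGroup (f z) (hcont z hz) M hM.self_of_nhds, fun _ => rfl⟩
  choose! G hG using hlift
  have hGdiff : DifferentiableOn ℂ G U := by
    refine differentiableOn_boundedContinuousFunction hU
      (fun x => (hd x).congr fun z hz => hG z hz x) fun z hz => ?_
    obtain ⟨M, hM⟩ := hbound z hz
    refine ⟨M, ?_⟩
    filter_upwards [hM, hU.mem_nhds hz] with y hy hyU x
    exact hG y hyU x ▸ hy x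
  refine ⟨G, hG, hGdiff, fun z hz h x => ?_⟩
  have hGf : (fun y => G y x) =ᶠ[𝓝 z] fun y => f y x :=
    (hU.eventually_mem hz).mono fun y hy => hG y hy x
  rw [fderiv_boundedContinuousFunction_apply (hGdiff.differentiableAt (hU.mem_nhds hz)),
    hGf.fderiv_eq]

end Holomorphic

/-- **Lemma 4.6** (holomorphy of partial application into the Banach space of bounded
functions).  Let `E` and `F` be complex Banach spaces, `U ⊆ E` and `V ⊆ F` open sets,
`M ≥ 0`, and let `f : U × V → ℂ` be holomorphic with `‖f (z,w)‖ ≤ M` on `U × V`.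
Then for each `z ∈ U` the function `w ↦ f (z,w)` is a bounded continuous function on `V`
(i.e. there is a map `G` into the Banach space `V →ᵇ ℂ` of bounded continuous functions
with `G z w = f (z,w)` for `z ∈ U`), the induced map `G : U → (V →ᵇ ℂ)` is holomorphic
on `U`, and its Fréchet derivative satisfies `(DG_z h) w = D₁f_{(z,w)} h`, where
`D₁f_{(z,w)}` is the partial Fréchet derivative of `f` in the first variable. -/
theorem holomorphic_into_boundedContinuousFunctions
    (E F : Type*) [NormedAddCommGroup E] [NormedSpace ℂ E] [CompleteSpace E]
    [NormedAddCommGroup F] [NormedSpace ℂ F] [CompleteSpace F]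
    (U : Set E) (V : Set F) (hU : IsOpen U) (hV : IsOpen V)
    (M : ℝ) (hM : 0 ≤ M) (f : E × F → ℂ)
    (hf : DifferentiableOn ℂ f (U ×ˢ V))
    (hbound : ∀ p ∈ U ×ˢ V, ‖f p‖ ≤ M) :
    ∃ G : E → BoundedContinuousFunction V ℂ,
      (∀ z ∈ U, ∀ w : V, G z w = f (z, (w : F))) ∧
      DifferentiableOn ℂ G U ∧
      (∀ z ∈ U, ∀ h : E, ∀ w : V,
        (fderiv ℂ G z h) w = fderiv ℂ (fun z' => f (z', (w : F))) z h) :=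
  holomorphic_into_boundedContinuousFunctions_general hU
    (fun w => hf.comp (by fun_prop) fun _ hz => ⟨hz, w.2⟩)
    (fun _ hz => hf.continuousOn.comp_continuous (by fun_prop) fun w => ⟨hz, w.2⟩)
    fun _ hz => ⟨M, (hU.eventually_mem hz).mono fun _ hy w => hbound _ ⟨hy, w.2⟩⟩
end

section
/- Quadratic Taylor remainder estimate for bounded holomorphic functions (from the proof of Lemma 4.6). Let E be a complex Banach space, z ∈ E, R > 0, M ≥ 0, and let f : E → ℂ be holomorphic on the open ball B(z,R) with |f(x)| ≤ M for all x ∈ B(z,R). Then for every h ∈ E with ‖h‖ < R one has |f(z+h) − f(z) − Df_z(h)| ≤ M·‖h‖² / (R − ‖h‖)², where Df_z denotes the Fréchet derivative of f at z. -/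
/-!
The Taylor coefficients of a holomorphic function bounded by `M` on a disc of radius `R` satisfy
Cauchy's estimates `‖aₙ‖ ≤ M / R ^ n`, so the Taylor series of order at least two is dominated at
distance `t` from the centre by the geometric series `∑ M (t / R) ^ n`, `n ≥ 2`, whose sum is
`M t ^ 2 / (R (R - t))`. In a Banach space this applies to the restriction of `f` to the complex
line through `z` in the direction of `h`.
-/

open Filter Metric Topology
open scoped Nat

section OneVariable

variable {F : Type*} [NormedAddCommGroup F] [NormedSpace ℂ F] {f : ℂ → F} {c w : ℂ} {R M : ℝ}

theorem norm_iteratedDeriv_le_of_forall_mem_ball_norm_le [CompleteSpace F] (n : ℕ) (hR : 0 < R)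
    (hf : DifferentiableOn ℂ f (ball c R)) (hM : ∀ x ∈ ball c R, ‖f x‖ ≤ M) :
    ‖iteratedDeriv n f c‖ ≤ n ! * M / R ^ n := by
  have cauchy_of_lt : ∀ ρ ∈ Set.Ioo 0 R, ‖iteratedDeriv n f c‖ ≤ n ! * M / ρ ^ n := by
    rintro ρ ⟨hρ, hρR⟩
    have hsub : closedBall c ρ ⊆ ball c R := closedBall_subset_ball hρR
    exact Complex.norm_iteratedDeriv_le_of_forall_mem_sphere_norm_le n hρ
      ((hf.mono hsub).diffContOnCl_ball Set.Subset.rfl)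
      fun x hx => hM x (hsub (sphere_subset_closedBall hx))
  have hlim : Tendsto (fun ρ : ℝ => n ! * M / ρ ^ n) (𝓝[<] R) (𝓝 (n ! * M / R ^ n)) :=
    (tendsto_const_nhds.div (tendsto_id.pow n) (pow_ne_zero n hR.ne')).mono_left
      nhdsWithin_le_nhds
  exact ge_of_tendsto hlim (eventually_of_mem (Ioo_mem_nhdsLT hR) cauchy_of_lt)

theorem norm_sub_sum_range_iteratedDeriv_le_of_forall_mem_ball_norm_le [CompleteSpace F] (n : ℕ)
    (hf : DifferentiableOn ℂ f (ball c R)) (hM : ∀ x ∈ ball c R, ‖f x‖ ≤ M) (hw : w ∈ ball c R) :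
    ‖f w - ∑ k ∈ Finset.range n, (k ! : ℂ)⁻¹ • (w - c) ^ k • iteratedDeriv k f c‖ ≤
      M * (‖w - c‖ / R) ^ n / (1 - ‖w - c‖ / R) := by
  have hR : 0 < R := pos_of_mem_ball hw
  have hratio : ‖w - c‖ / R < 1 := (div_lt_one hR).mpr (mem_ball_iff_norm.mp hw)
  have hterm (k : ℕ) :
      ‖(k ! : ℂ)⁻¹ • (w - c) ^ k • iteratedDeriv k f c‖ ≤ M * (‖w - c‖ / R) ^ k := by
    rw [norm_smul, norm_smul, norm_inv, norm_pow, Complex.norm_natCast]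
    calc (k ! : ℝ)⁻¹ * (‖w - c‖ ^ k * ‖iteratedDeriv k f c‖)
        ≤ (k ! : ℝ)⁻¹ * (‖w - c‖ ^ k * (k ! * M / R ^ k)) := by
          gcongr
          exact norm_iteratedDeriv_le_of_forall_mem_ball_norm_le k hR hf hM
      _ = M * (‖w - c‖ / R) ^ k := by
          rw [div_pow]
          field_simp
  rw [norm_sub_rev]
  exact norm_sub_le_of_geometric_bound_of_hasSum hratio hterm
    (Complex.hasSum_taylorSeries_on_ball hf hw) n

theorem norm_sub_sub_smul_deriv_le_of_forall_mem_ball_norm_le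
    (hf : DifferentiableOn ℂ f (ball c R)) (hM : ∀ x ∈ ball c R, ‖f x‖ ≤ M) (hw : w ∈ ball c R) :
    ‖f w - f c - (w - c) • deriv f c‖ ≤ M * ‖w - c‖ ^ 2 / (R * (R - ‖w - c‖)) := by
  have hR : 0 < R := pos_of_mem_ball hw
  have hdist : 0 < R - ‖w - c‖ := sub_pos.mpr (mem_ball_iff_norm.mp hw)
  -- The Taylor series of `f` need only converge in the completion of `F`.
  let ι : F →ₗᵢ[ℂ] UniformSpace.Completion F := UniformSpace.Completion.toComplₗᵢ
  have hderiv : deriv (ι ∘ f) c = ι (deriv f c) :=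
    (ι.toContinuousLinearMap.hasFDerivAt.comp_hasDerivAt c
      (hf.differentiableAt (ball_mem_nhds c hR)).hasDerivAt).deriv
  have hTaylor := norm_sub_sum_range_iteratedDeriv_le_of_forall_mem_ball_norm_le (f := ι ∘ f) 2
    (ι.toContinuousLinearMap.differentiable.comp_differentiableOn hf)
    (fun x hx => (ι.norm_map (f x)).trans_le (hM x hx)) hw
  calc ‖f w - f c - (w - c) • deriv f c‖
      = ‖ι (f w) - ι (f c) - (w - c) • ι (deriv f c)‖ := by
        rw [← ι.norm_map, map_sub, map_sub, map_smul]
    _ ≤ M * (‖w - c‖ / R) ^ 2 / (1 - ‖w - c‖ / R) := by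
        simpa [Finset.sum_range_succ, hderiv, sub_sub] using hTaylor
    _ = M * ‖w - c‖ ^ 2 / (R * (R - ‖w - c‖)) := by
        have : 1 - ‖w - c‖ / R ≠ 0 := by rw [one_sub_div hR.ne']; positivity
        field_simp

end OneVariable

theorem quadratic_taylor_remainder_of_bounded_holomorphic_general
    {E F : Type*} [NormedAddCommGroup E] [NormedSpace ℂ E] [NormedAddCommGroup F] [NormedSpace ℂ F]
    {f : E → F} {z h : E} {R M : ℝ} (hf : DifferentiableOn ℂ f (ball z R))
    (hM : ∀ x ∈ ball z R, ‖f x‖ ≤ M) (hh : ‖h‖ < R) :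
    ‖f (z + h) - f z - fderiv ℂ f z h‖ ≤ M * ‖h‖ ^ 2 / (R * (R - ‖h‖)) := by
  obtain ⟨u, hu, hhu⟩ : ∃ u : E, ‖u‖ ≤ 1 ∧ (‖h‖ : ℂ) • u = h :=
    ⟨NormedSpace.normalize h, mem_closedBall_zero_iff.mp (inv_norm_smul_mem_unitClosedBall h),
      NormedSpace.norm_smul_normalize h⟩
  let line : ℂ → E := fun t => z + t • u
  have hline : Set.MapsTo line (ball 0 R) (ball z R) := by
    intro t ht
    rw [mem_ball_zero_iff] at ht
    rw [mem_ball_iff_norm, add_sub_cancel_left, norm_smul]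
    exact (mul_le_of_le_one_right (norm_nonneg t) hu).trans_lt ht
  have hderiv : deriv (f ∘ line) 0 = fderiv ℂ f z u :=
    (hf.differentiableAt (ball_mem_nhds z ((norm_nonneg h).trans_lt hh))).lineDeriv_eq_fderiv
  have hremainder := norm_sub_sub_smul_deriv_le_of_forall_mem_ball_norm_le (w := ‖h‖)
    (hf.comp (by fun_prop) hline) (fun t ht => hM _ (hline ht)) (by simpa using hh)
  simpa [line, hderiv, ← map_smul, hhu] using hremainder

/-- **Quadratic Taylor remainder estimate for bounded holomorphic functions**
(from the proof of Lemma 4.6).  Let `E` be a complex Banach space, `z ∈ E`, `R > 0`,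
`M ≥ 0`, and let `f : E → ℂ` be holomorphic on the open ball `B(z,R)` with `‖f x‖ ≤ M`
for all `x ∈ B(z,R)`.  Then for every `h ∈ E` with `‖h‖ < R` one has
`‖f (z+h) − f z − Df_z h‖ ≤ M ‖h‖² / (R − ‖h‖)²`, where `Df_z` is the Fréchet
derivative of `f` at `z`. -/
theorem quadratic_taylor_remainder_of_bounded_holomorphic
    (E : Type*) [NormedAddCommGroup E] [NormedSpace ℂ E] [CompleteSpace E]
    (f : E → ℂ) (z : E) (R M : ℝ) (hR : 0 < R) (hM : 0 ≤ M)
    (hf : DifferentiableOn ℂ f (Metric.ball z R))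
    (hbound : ∀ x ∈ Metric.ball z R, ‖f x‖ ≤ M) :
    ∀ h : E, ‖h‖ < R →
      ‖f (z + h) - f z - fderiv ℂ f z h‖ ≤ M * ‖h‖ ^ 2 / (R - ‖h‖) ^ 2 := by
  intro h hh
  have : 0 < R - ‖h‖ := sub_pos.mpr hh
  calc ‖f (z + h) - f z - fderiv ℂ f z h‖ ≤ M * ‖h‖ ^ 2 / (R * (R - ‖h‖)) :=
        quadratic_taylor_remainder_of_bounded_holomorphic_general hf hbound hh
    _ ≤ M * ‖h‖ ^ 2 / (R - ‖h‖) ^ 2 := by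
        rw [sq (R - ‖h‖)]
        gcongr
        exact sub_le_self R (norm_nonneg h)
end

section
/- Lemma 11.3. Let R be a nontrivial commutative local ring and let I, J ⊆ R be two ideals such that the product ideal I·J is a principal ideal generated by a non-zero-divisor. Then both I and J are principal ideals generated by non-zero-divisors. -/
/-!
If `I * J = (a)` with `a` a non-zero-divisor, then `a` becomes a unit of the total ring of fractions
`K`, so `I` is invertible among the `R`-submodules of `K`. Its class in `Pic R` is trivial when `R`
is local, and the kernel of `(Submodule R K)ˣ → Pic R` consists of the principal submodules; hence
`I` is principal. Its generator divides `a`, so it is a non-zero-divisor. The same applies to `J`.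
-/

open CommRing IsLocalization
open scoped nonZeroDivisors

theorem submodule_isPrincipal_of_isUnit_of_subsingleton_pic {R A : Type*} [CommSemiring R]
    [CommSemiring A] [Algebra R A] [FaithfulSMul R A] [Subsingleton (Pic R)] {I : Submodule R A}
    (hI : IsUnit I) : I.IsPrincipal := by
  obtain ⟨I, rfl⟩ := hI
  have hker : I ∈ (Submodule.unitsToPic R A).ker := Subsingleton.elim _ _
  rw [Submodule.ker_unitsToPic] at hker
  obtain ⟨x, rfl⟩ := hker
  exact ⟨x, rfl⟩

theorem isUnit_coeSubmodule_span_singleton {R : Type*} (A : Type*) [CommSemiring R]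
    [CommSemiring A] [Algebra R A] {S : Submonoid R} [IsLocalization S A] {a : R} (ha : a ∈ S) :
    IsUnit (coeSubmodule A (Ideal.span {a})) := by
  rw [coeSubmodule_span_singleton]
  exact (map_units A (⟨a, ha⟩ : S)).map (Submodule.spanSingleton R)

theorem exists_eq_span_singleton_mem_nonZeroDivisors {R : Type*} [CommSemiring R]
    {I : Ideal R} (hI : I.IsPrincipal) {a : R} (haI : a ∈ I) (ha : a ∈ R⁰) :
    ∃ b : R, I = Ideal.span {b} ∧ b ∈ R⁰ := by
  obtain ⟨b, rfl⟩ := hI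
  obtain ⟨r, rfl⟩ := Ideal.mem_span_singleton.mp haI
  exact ⟨b, rfl, (mul_mem_nonZeroDivisors.mp ha).1⟩

section IdealFactors

variable {R : Type*} [CommRing R] [Subsingleton (Pic R)] {I J : Ideal R} {a : R}

theorem isPrincipal_left_of_mul_eq_span_singleton
    (h : I * J = Ideal.span {a}) (ha : a ∈ R⁰) : I.IsPrincipal := by
  have hIJ : IsUnit (coeSubmodule (FractionRing R) I * coeSubmodule (FractionRing R) J) := by
    rw [← coeSubmodule_mul, h]
    exact isUnit_coeSubmodule_span_singleton _ ha
  exact (IsFractionRing.coeSubmodule_isPrincipal R (FractionRing R)).mp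
    (submodule_isPrincipal_of_isUnit_of_subsingleton_pic (isUnit_of_mul_isUnit_left hIJ))

theorem exists_left_eq_span_singleton_of_mul_eq_span_singleton
    (h : I * J = Ideal.span {a}) (ha : a ∈ R⁰) : ∃ b : R, I = Ideal.span {b} ∧ b ∈ R⁰ := by
  have haIJ : a ∈ I * J := by
    rw [h]
    exact Ideal.mem_span_singleton_self a
  exact exists_eq_span_singleton_mem_nonZeroDivisors
    (isPrincipal_left_of_mul_eq_span_singleton h ha) (Ideal.mul_le_left haIJ) ha

end IdealFactors

theorem product_principal_nonZeroDivisor_implies_factors_principal_general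
    (R : Type*) [CommRing R] [Subsingleton (Pic R)] (I J : Ideal R)
    (h : ∃ a : R, I * J = Ideal.span {a} ∧ a ∈ nonZeroDivisors R) :
    (∃ b : R, I = Ideal.span {b} ∧ b ∈ nonZeroDivisors R) ∧
    (∃ c : R, J = Ideal.span {c} ∧ c ∈ nonZeroDivisors R) := by
  obtain ⟨a, hIJ, ha⟩ := h
  have hJI : J * I = Ideal.span {a} := by rw [mul_comm, hIJ]
  exact ⟨exists_left_eq_span_singleton_of_mul_eq_span_singleton hIJ ha,
    exists_left_eq_span_singleton_of_mul_eq_span_singleton hJI ha⟩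

/-- **Lemma 11.3.** Let `R` be a nontrivial commutative local ring and `I, J ⊆ R` two ideals
such that the product ideal `I·J` is a principal ideal generated by a non-zero-divisor.
Then both `I` and `J` are principal ideals generated by non-zero-divisors. -/
theorem product_principal_nonZeroDivisor_implies_factors_principal
    (R : Type*) [CommRing R] [Nontrivial R] [IsLocalRing R] (I J : Ideal R)
    (h : ∃ a : R, I * J = Ideal.span {a} ∧ a ∈ nonZeroDivisors R) :
    (∃ b : R, I = Ideal.span {b} ∧ b ∈ nonZeroDivisors R) ∧
    (∃ c : R, J = Ideal.span {c} ∧ c ∈ nonZeroDivisors R) :=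
  product_principal_nonZeroDivisor_implies_factors_principal_general R I J h
end

section
/- Lemma 11.4. Let R be a nontrivial commutative local ring and let h₁, …, h_n ∈ R (n ≥ 1) be non-zero-divisors. Let D = ∏_{∅ ≠ S ⊆ {1,…,n}} (h_i : i ∈ S) be the product, over all nonempty subsets S of {1,…,n}, of the ideals generated by {h_i : i ∈ S}. Then D is a principal ideal generated by a non-zero-divisor if and only if h₁, …, h_n are totally ordered by the divisibility relation, i.e. for all indices i, j one has h_i ∣ h_j or h_j ∣ h_i. -/
/-!
In a local ring, if `b` is nonzero and generates the ideal spanned by a set `t`, then some element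
of `t` already generates it: otherwise `t ⊆ 𝔪 b`, so `b = z b` with `z ∈ 𝔪`, and `b = 0` because
`1 - z` is a unit. Applied to the products `x u` with `x ∈ I` and `u ∈ J`, this shows that a factor
`I` of a regular principal ideal `I J` is regular principal, since `u` can be cancelled from
`x u ∣ y u` for each `y ∈ I`. Applied to a generating set of `I`, it finds in that set an element
dividing all the others. The factors indexed by singletons and by pairs then give regularity and
comparability.
-/

/-- A regular principal ideal: one generated by a non-zero-divisor. Over a local ring this passes
from a product of ideals to its factors, which being principal does not. -/
def IsRegularPrincipal {R : Type*} [CommSemiring R] (I : Ideal R) : Prop :=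
  ∃ b : R, I = Ideal.span {b} ∧ b ∈ nonZeroDivisors R

theorem IsRegularPrincipal.prod {R ι : Type*} [CommSemiring R] {s : Finset ι} {I : ι → Ideal R}
    (hI : ∀ i ∈ s, IsRegularPrincipal (I i)) : IsRegularPrincipal (∏ i ∈ s, I i) := by
  refine Finset.prod_induction I IsRegularPrincipal ?_ ?_ hI
  · rintro _ _ ⟨a, rfl, ha⟩ ⟨b, rfl, hb⟩
    exact ⟨a * b, Ideal.span_singleton_mul_span_singleton a b, mul_mem ha hb⟩
  · exact ⟨1, by rw [Ideal.span_singleton_one, Ideal.one_eq_top], one_mem _⟩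

theorem span_eq_span_singleton_of_forall_dvd {R : Type*} [CommSemiring R] {t : Set R} {x : R}
    (hx : x ∈ t) (hdvd : ∀ y ∈ t, x ∣ y) : Ideal.span t = Ideal.span {x} :=
  le_antisymm (Ideal.span_le.2 fun y hy => Ideal.mem_span_singleton.2 (hdvd y hy))
    (Ideal.span_mono (Set.singleton_subset_iff.2 hx))

theorem exists_mem_forall_dvd_of_dvd_total {M ι : Type*} [CommMonoid M] {s : Finset ι}
    (hs : s.Nonempty) {f : ι → M} (htotal : ∀ i ∈ s, ∀ j ∈ s, f i ∣ f j ∨ f j ∣ f i) :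
    ∃ i ∈ s, ∀ j ∈ s, f i ∣ f j := by
  obtain ⟨i, hi, hmin⟩ := Finset.exists_minimalFor (fun i => Associates.mk (f i)) s hs
  simp only [Associates.mk_le_mk_iff_dvd] at hmin
  exact ⟨i, hi, fun j hj => (htotal i hi j hj).elim id (hmin hj)⟩

section IsLocalRing

variable {R : Type*} [CommRing R] [IsLocalRing R]

theorem exists_mem_dvd_of_span_eq_span_singleton {t : Set R} {b : R} (hb : b ≠ 0)
    (ht : Ideal.span t = Ideal.span {b}) : ∃ x ∈ t, x ∣ b := by
  by_contra! hndvd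
  have ht_le : Ideal.span t ≤ IsLocalRing.maximalIdeal R * Ideal.span {b} := by
    refine Ideal.span_le.2 fun x hx => ?_
    obtain ⟨a, rfl⟩ : b ∣ x := Ideal.mem_span_singleton.1 (ht ▸ Ideal.subset_span hx)
    have ha : a ∈ IsLocalRing.maximalIdeal R := fun ha_unit =>
      hndvd _ hx (ha_unit.mul_right_dvd.2 dvd_rfl)
    exact Ideal.mem_mul_span_singleton.2 ⟨a, ha, mul_comm a b⟩
  obtain ⟨z, hz, hzb⟩ : ∃ z ∈ IsLocalRing.maximalIdeal R, z * b = b :=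
    Ideal.mem_mul_span_singleton.1 (ht_le (ht ▸ Ideal.mem_span_singleton_self b))
  have hunit : IsUnit (1 - z) := IsLocalRing.isUnit_one_sub_self_of_mem_nonunits z hz
  exact hb (hunit.mul_right_eq_zero.1 (by rw [sub_mul, one_mul, hzb, sub_self]))

open scoped Pointwise in
theorem IsRegularPrincipal.of_dvd {I K : Ideal R} (hK : IsRegularPrincipal K) (hIK : I ∣ K) :
    IsRegularPrincipal I := by
  obtain ⟨b, rfl, hb⟩ := hK
  obtain ⟨J, hJ⟩ := hIK
  have hspan : Ideal.span ((I : Set R) * (J : Set R)) = Ideal.span {b} := by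
    rw [← Ideal.span_mul_span', Ideal.span_eq, Ideal.span_eq, hJ]
  obtain ⟨_, ⟨x, hx, u, hu, rfl⟩, hxub : x * u ∣ b⟩ :=
    exists_mem_dvd_of_span_eq_span_singleton (nonZeroDivisors.ne_zero hb) hspan
  obtain ⟨hx_reg, hu_reg⟩ : x ∈ nonZeroDivisors R ∧ u ∈ nonZeroDivisors R := by
    obtain ⟨c, rfl⟩ := hxub
    exact mul_mem_nonZeroDivisors.1 (mul_mem_nonZeroDivisors.1 hb).1
  have hx_dvd : ∀ y ∈ I, x ∣ y := fun y hy => by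
    have hbyu : b ∣ y * u := Ideal.mem_span_singleton.1 (hJ ▸ Ideal.mul_mem_mul hy hu)
    exact (dvd_cancel_right_mem_nonZeroDivisors hu_reg).1 (hxub.trans hbyu)
  exact ⟨x, I.span_eq.symm.trans (span_eq_span_singleton_of_forall_dvd hx hx_dvd), hx_reg⟩

theorem isRegularPrincipal_prod_iff {ι : Type*} {s : Finset ι} {I : ι → Ideal R} :
    IsRegularPrincipal (∏ i ∈ s, I i) ↔ ∀ i ∈ s, IsRegularPrincipal (I i) :=
  ⟨fun hprod _ hi => hprod.of_dvd (Finset.dvd_prod_of_mem I hi), .prod⟩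

theorem isRegularPrincipal_span_iff {t : Set R} :
    IsRegularPrincipal (Ideal.span t) ↔ ∃ x ∈ t, x ∈ nonZeroDivisors R ∧ ∀ y ∈ t, x ∣ y := by
  constructor
  · rintro ⟨b, ht, hb⟩
    obtain ⟨x, hx, c, rfl⟩ :=
      exists_mem_dvd_of_span_eq_span_singleton (nonZeroDivisors.ne_zero hb) ht
    refine ⟨x, hx, (mul_mem_nonZeroDivisors.1 hb).1, fun y hy => ?_⟩
    have hxc_dvd : x * c ∣ y := Ideal.mem_span_singleton.1 (ht ▸ Ideal.subset_span hy)
    exact dvd_of_mul_right_dvd hxc_dvd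
  · rintro ⟨x, hx, hx_reg, hdvd⟩
    exact ⟨x, span_eq_span_singleton_of_forall_dvd hx hdvd, hx_reg⟩

theorem disorderly_ideal_principal_iff_divisibility_chain_general {ι : Type*} [DecidableEq ι]
    (s : Finset ι) (h : ι → R) :
    IsRegularPrincipal (∏ S ∈ s.powerset.erase ∅, Ideal.span (h '' (S : Set ι))) ↔
      (∀ i ∈ s, h i ∈ nonZeroDivisors R) ∧ ∀ i ∈ s, ∀ j ∈ s, h i ∣ h j ∨ h j ∣ h i := by
  simp only [isRegularPrincipal_prod_iff, isRegularPrincipal_span_iff, Set.exists_mem_image,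
    Set.forall_mem_image, Finset.mem_coe, Finset.mem_erase, Finset.mem_powerset, and_imp,
    ← Finset.nonempty_iff_ne_empty]
  constructor
  · refine fun hmin => ⟨fun i hi => ?_, fun i hi j hj => ?_⟩
    · simpa using hmin {i} (by simp) (by simpa using hi)
    · obtain ⟨k, hk, -, hdvd⟩ := hmin {i, j} (by simp) (by simp [Finset.insert_subset_iff, hi, hj])
      obtain rfl | rfl : k = i ∨ k = j := by simpa using hk
      · exact .inl (hdvd (by simp))
      · exact .inr (hdvd (by simp))
  · rintro ⟨hreg, htotal⟩ S hS hSs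
    obtain ⟨i, hi, hdvd⟩ := exists_mem_forall_dvd_of_dvd_total hS
      fun i hi j hj => htotal i (hSs hi) j (hSs hj)
    exact ⟨i, hi, hreg i (hSs hi), fun j => hdvd j⟩

end IsLocalRing

/-- **Lemma 11.4.** Let `R` be a nontrivial commutative local ring and `h₁, …, hₙ ∈ R`
(with `n ≥ 1`) non-zero-divisors.  Let `D` be the product, over all nonempty subsets
`S ⊆ {1,…,n}`, of the ideals generated by `{hᵢ : i ∈ S}`.  Then `D` is a principal ideal
generated by a non-zero-divisor if and only if `h₁, …, hₙ` are totally ordered by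
divisibility, i.e. for all `i, j` one has `hᵢ ∣ hⱼ` or `hⱼ ∣ hᵢ`. -/
theorem disorderly_ideal_principal_iff_divisibility_chain
    (R : Type*) [CommRing R] [Nontrivial R] [IsLocalRing R] (n : ℕ) (hn : 1 ≤ n)
    (h : Fin n → R) (hnzd : ∀ i : Fin n, h i ∈ nonZeroDivisors R) :
    (∃ b : R,
        (∏ S ∈ (Finset.univ : Finset (Fin n)).powerset.erase ∅,
            Ideal.span (h '' (S : Set (Fin n)))) = Ideal.span {b} ∧
        b ∈ nonZeroDivisors R)
      ↔ ∀ i j : Fin n, h i ∣ h j ∨ h j ∣ h i :=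
  (disorderly_ideal_principal_iff_divisibility_chain_general Finset.univ h).trans (by simp [hnzd])
end

section
/- Key step in the proof of Lemma 11.4. Let R be a nontrivial commutative local ring, b ∈ R a non-zero-divisor, and h₁, …, h_n ∈ R elements such that the ideal (h₁, …, h_n) generated by them equals the principal ideal (b). Then there exists an index i such that h_i divides h_j for every j ∈ {1,…,n}; in particular (h₁, …, h_n) = (h_i). -/
/-!
If no generator `a ∈ s` of a principal submodule `N = span R {b}` generates `N` alone, then each
`a` is a nonunit multiple of `b`, so `N ≤ 𝔪 • N` and `N = 0` by Nakayama's lemma. But when `N = 0`,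
every element of `s` generates `N`.
-/

open IsLocalRing Submodule

theorem mem_maximalIdeal_smul_span_singleton {R M : Type*} [CommSemiring R] [IsLocalRing R]
    [AddCommMonoid M] [Module R M] {a b : M} (ha : a ∈ span R {b}) (hne : span R {a} ≠ span R {b}) :
    a ∈ maximalIdeal R • span R {b} := by
  obtain ⟨c, rfl⟩ := mem_span_singleton.mp ha
  have hc : c ∈ maximalIdeal R :=
    (mem_maximalIdeal c).mpr fun hunit => hne (span_singleton_smul_eq hunit b)
  exact smul_mem_smul hc (mem_span_singleton_self b)

theorem nonempty_of_span_range_eq_span_singleton {R M ι : Type*} [Semiring R] [AddCommMonoid M]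
    [Module R M] {h : ι → M} {b : M} (hb : b ≠ 0) (hspan : span R (Set.range h) = span R {b}) :
    Nonempty ι := by
  by_contra hempty
  rw [not_nonempty_iff, ← Set.range_eq_empty_iff (f := h)] at hempty
  rw [hempty, span_empty, eq_comm, span_singleton_eq_bot] at hspan
  exact hb hspan

section Module

variable {R M ι : Type*} [CommRing R] [IsLocalRing R] [AddCommGroup M] [Module R M]

theorem eq_bot_of_le_maximalIdeal_smul {N : Submodule R M} (hN : N.FG)
    (hle : N ≤ maximalIdeal R • N) : N = ⊥ :=
  eq_bot_of_le_smul_of_le_jacobson_bot _ N hN hle (maximalIdeal_le_jacobson ⊥)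

theorem exists_mem_span_eq_span_singleton_of_isPrincipal {s : Set M} (hs : s.Nonempty)
    (hprincipal : (span R s).IsPrincipal) : ∃ a ∈ s, span R s = span R {a} := by
  obtain ⟨b, hspan⟩ := hprincipal
  by_contra! hne
  have hle : span R s ≤ maximalIdeal R • span R s := by
    refine span_le.mpr fun a ha => ?_
    rw [hspan]
    exact mem_maximalIdeal_smul_span_singleton (hspan ▸ subset_span ha)
      fun heq => hne a ha (hspan.trans heq.symm)
  have hbot : span R s = ⊥ :=
    eq_bot_of_le_maximalIdeal_smul (hspan ▸ fg_span_singleton b) hle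
  obtain ⟨a, ha⟩ := hs
  have ha0 : a = 0 := span_eq_bot.mp hbot a ha
  exact hne a ha (by rw [hbot, ha0, span_zero_singleton])

theorem exists_generator_of_span_eq_span_singleton_nonZeroDivisor_general [Nonempty ι]
    (h : ι → M) (hprincipal : (span R (Set.range h)).IsPrincipal) :
    ∃ i, (∀ j, h j ∈ span R {h i}) ∧ span R (Set.range h) = span R {h i} := by
  obtain ⟨_, ⟨i, rfl⟩, hi⟩ :=
    exists_mem_span_eq_span_singleton_of_isPrincipal (Set.range_nonempty h) hprincipal
  exact ⟨i, fun j => hi ▸ subset_span (Set.mem_range_self j), hi⟩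

end Module

/-- **Key step in the proof of Lemma 11.4.** Let `R` be a nontrivial commutative local ring,
`b ∈ R` a non-zero-divisor, and `h₁, …, hₙ ∈ R` elements such that the ideal `(h₁, …, hₙ)`
generated by them equals the principal ideal `(b)`.  Then there exists an index `i` such
that `hᵢ` divides `hⱼ` for every `j ∈ {1,…,n}`; in particular `(h₁, …, hₙ) = (hᵢ)`. -/
theorem exists_generator_of_span_eq_span_singleton_nonZeroDivisor
    (R : Type*) [CommRing R] [Nontrivial R] [IsLocalRing R] (n : ℕ) (h : Fin n → R)
    (b : R) (hb : b ∈ nonZeroDivisors R)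
    (hspan : Ideal.span (Set.range h) = Ideal.span {b}) :
    ∃ i : Fin n, (∀ j : Fin n, h i ∣ h j) ∧ Ideal.span (Set.range h) = Ideal.span {h i} := by
  have := nonempty_of_span_range_eq_span_singleton (nonZeroDivisors.ne_zero hb) hspan
  simpa only [← Ideal.mem_span_singleton] using
    exists_generator_of_span_eq_span_singleton_nonZeroDivisor_general h ⟨b, hspan⟩
end

section
/- Strebel normal form, zero case (case ord₀ω = k ≥ 0 of Theorem 4.1). Let δ > 0, k ∈ ℕ, and let g : Δ_δ → ℂ be holomorphic with g(0) ≠ 0. Then there exist ε > 0 and an injective holomorphic map φ : Δ_ε → Δ_δ with φ(0) = 0 such that φ(z)^k · g(φ(z)) · φ′(z) = z^k for all z ∈ Δ_ε. (This expresses that the conformal change of coordinate φ pulls back the differential ω = z^k g(z) dz to the standard form z^k dz.) -/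
/-!
A primitive `F` of `(k + 1) z ^ k g(z)` with `F 0 = 0` vanishes to order exactly `k + 1`, so near
`0` it is the `(k + 1)`-st power of a function `ψ` with a simple zero there. The local inverse `φ`
of `ψ` satisfies `F (φ z) = z ^ (k + 1)`, and differentiating this identity gives
`φ(z) ^ k g(φ(z)) φ′(z) = z ^ k`.
-/

open Filter Set Topology

section LocalInverse

variable {𝕜 : Type*} [NontriviallyNormedField 𝕜] [CompleteSpace 𝕜]

theorem exists_mem_nhds_injOn_of_hasStrictDerivAt {f : 𝕜 → 𝕜} {f' a : 𝕜}
    (hf : HasStrictDerivAt f f' a) (hf' : f' ≠ 0) : ∃ s ∈ 𝓝 a, InjOn f s :=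
  ⟨_, hf.eventually_left_inverse hf', LeftInvOn.injOn fun _ hx => hx⟩

theorem exists_analyticAt_rightInverse_of_deriv_ne_zero [CharZero 𝕜] {f : 𝕜 → 𝕜} {a : 𝕜}
    (hf : AnalyticAt 𝕜 f a) (hf' : deriv f a ≠ 0) :
    ∃ φ : 𝕜 → 𝕜, AnalyticAt 𝕜 φ (f a) ∧ φ (f a) = a ∧ deriv φ (f a) ≠ 0 ∧
      ∀ᶠ z in 𝓝 (f a), f (φ z) = z := by
  refine ⟨hf.hasStrictDerivAt.localInverse _ _ _ hf', hf.analyticAt_localInverse hf',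
    (hf.hasStrictDerivAt.eventually_left_inverse hf').self_of_nhds, ?_,
    hf.hasStrictDerivAt.eventually_right_inverse hf'⟩
  rw [(hf.hasStrictDerivAt.to_localInverse hf').hasDerivAt.deriv]
  exact inv_ne_zero hf'

end LocalInverse

theorem deriv_ne_zero_of_analyticOrderAt_eq_one {𝕜 E : Type*} [NontriviallyNormedField 𝕜]
    [CharZero 𝕜] [NormedAddCommGroup E] [NormedSpace 𝕜 E] [CompleteSpace E] {f : 𝕜 → E} {a : 𝕜}
    (hf : AnalyticAt 𝕜 f a) (h : analyticOrderAt f a = 1) : deriv f a ≠ 0 := by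
  have hfa : f a = 0 := apply_eq_zero_of_analyticOrderAt_ne_zero (by simp [h])
  have hord := hf.analyticOrderAt_deriv_add_one
  simp only [hfa, sub_zero, h] at hord
  exact hf.deriv.analyticOrderAt_eq_zero.mp (by simpa using hord)

theorem exists_analyticAt_primitive {E : Type*} [NormedAddCommGroup E] [NormedSpace ℂ E]
    [CompleteSpace E] {f : ℂ → E} {a : ℂ} (hf : AnalyticAt ℂ f a) (b : E) :
    ∃ F : ℂ → E, AnalyticAt ℂ F a ∧ F a = b ∧ ∀ᶠ z in 𝓝 a, HasDerivAt F (f z) z := by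
  obtain ⟨r, hr, hball⟩ := Metric.eventually_nhds_iff_ball.mp hf.eventually_analyticAt
  have hdiff : DifferentiableOn ℂ f (Metric.ball a r) := fun z hz =>
    (hball z hz).differentiableAt.differentiableWithinAt
  obtain ⟨F, hFa, hF⟩ := hdiff.isExactOn_ball.with_val_at a b
  have hF' : ∀ᶠ z in 𝓝 a, HasDerivAt F (f z) z :=
    eventually_of_mem (Metric.ball_mem_nhds a hr) hF
  exact ⟨F, Complex.analyticAt_iff_eventually_differentiableAt.mpr
    (hF'.mono fun _ hz => hz.differentiableAt), hFa, hF'⟩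

theorem exists_analyticAt_pow_eq {E : Type*} [NormedAddCommGroup E] [NormedSpace ℂ E]
    {h : E → ℂ} {a : E} (hh : AnalyticAt ℂ h a) (ha : h a ≠ 0) {n : ℕ} (hn : n ≠ 0) :
    ∃ r : E → ℂ, AnalyticAt ℂ r a ∧ ∀ w, r w ^ n = h w := by
  obtain ⟨c, hc⟩ := IsAlgClosed.exists_pow_nat_eq (h a) (Nat.pos_of_ne_zero hn)
  -- Dividing by `h a` moves the value at `a` to `1`, away from the branch cut of `cpow`.
  refine ⟨fun w => c * (h w / h a) ^ (n⁻¹ : ℂ), ?_, fun w => ?_⟩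
  · refine analyticAt_const.mul ((hh.div analyticAt_const ha).cpow analyticAt_const ?_)
    simp [ha]
  · rw [mul_pow, Complex.cpow_nat_inv_pow _ hn, hc, mul_div_cancel₀ _ ha]

theorem exists_eventuallyEq_pow_of_analyticOrderAt_eq_mul {f : ℂ → ℂ} {a : ℂ}
    (hf : AnalyticAt ℂ f a) {m n : ℕ} (hn : n ≠ 0) (hord : analyticOrderAt f a = (m * n : ℕ)) :
    ∃ ψ : ℂ → ℂ, AnalyticAt ℂ ψ a ∧ analyticOrderAt ψ a = m ∧ f =ᶠ[𝓝 a] ψ ^ n := by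
  obtain ⟨h, hh, ha, hfh⟩ := hf.analyticOrderAt_eq_natCast.mp hord
  obtain ⟨r, hr, hrh⟩ := exists_analyticAt_pow_eq hh ha hn
  have hra : r a ≠ 0 := fun h0 => ha (by rw [← hrh, h0, zero_pow hn])
  have hψ : AnalyticAt ℂ (fun w => (w - a) ^ m * r w) a := by fun_prop
  refine ⟨_, hψ, hψ.analyticOrderAt_eq_natCast.mpr ⟨r, hr, hra, by simp⟩, ?_⟩
  filter_upwards [hfh] with w hw
  rw [hw, Pi.pow_apply, mul_pow, hrh, pow_mul, smul_eq_mul]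

theorem exists_analyticAt_comp_eventuallyEq_pow {F : ℂ → ℂ} {a : ℂ} (hF : AnalyticAt ℂ F a)
    {n : ℕ} (hn : n ≠ 0) (hord : analyticOrderAt F a = n) :
    ∃ φ : ℂ → ℂ, AnalyticAt ℂ φ 0 ∧ φ 0 = a ∧ deriv φ 0 ≠ 0 ∧
      ∀ᶠ z in 𝓝 0, F (φ z) = z ^ n := by
  obtain ⟨ψ, hψ, hψord, hFψ⟩ :=
    exists_eventuallyEq_pow_of_analyticOrderAt_eq_mul hF (m := 1) hn (by simpa using hord)
  have hψa : ψ a = 0 := apply_eq_zero_of_analyticOrderAt_ne_zero (by simp [hψord])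
  obtain ⟨φ, hφ, hφ0, hφ', hψφ⟩ := exists_analyticAt_rightInverse_of_deriv_ne_zero hψ
    (deriv_ne_zero_of_analyticOrderAt_eq_one hψ (by simpa using hψord))
  rw [hψa] at hφ hφ0 hφ' hψφ
  refine ⟨φ, hφ, hφ0, hφ', ?_⟩
  filter_upwards [hψφ, hφ.continuousAt.eventually (hφ0.symm ▸ hFψ)] with z hz hFz
  rw [hFz, Pi.pow_apply, hz]

theorem exists_analyticAt_pullback_eventuallyEq_pow {f : ℂ → ℂ} {a : ℂ} (hf : AnalyticAt ℂ f a)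
    {k : ℕ} (hord : analyticOrderAt f a = k) :
    ∃ φ : ℂ → ℂ, AnalyticAt ℂ φ 0 ∧ φ 0 = a ∧ deriv φ 0 ≠ 0 ∧
      ∀ᶠ z in 𝓝 0, f (φ z) * deriv φ z = z ^ k := by
  have hk : (k + 1 : ℂ) ≠ 0 := Nat.cast_add_one_ne_zero k
  obtain ⟨F, hF, hFa, hF'⟩ := exists_analyticAt_primitive (analyticAt_const.mul hf) 0
  have hFord : analyticOrderAt F a = (k + 1 : ℕ) := by
    have hderiv : deriv F =ᶠ[𝓝 a] (fun _ => (k + 1 : ℂ)) * f := hF'.mono fun _ hz => hz.deriv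
    have hconst : analyticOrderAt (fun _ : ℂ => (k + 1 : ℂ)) a = 0 :=
      analyticAt_const.analyticOrderAt_eq_zero.mpr hk
    simpa [analyticOrderAt_congr hderiv, analyticOrderAt_mul analyticAt_const hf, hconst, hord,
      hFa] using hF.analyticOrderAt_deriv_add_one.symm
  obtain ⟨φ, hφ, hφ0, hφ', hFφ⟩ := exists_analyticAt_comp_eventuallyEq_pow hF k.succ_ne_zero hFord
  refine ⟨φ, hφ, hφ0, hφ', ?_⟩
  filter_upwards [hFφ.eventually_nhds, hφ.eventually_analyticAt,
    hφ.continuousAt.eventually (hφ0.symm ▸ hF')] with z hz hφz hFz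
  have hcomp : HasDerivAt (fun y => F (φ y)) ((k + 1) * f (φ z) * deriv φ z) z :=
    hFz.comp z hφz.differentiableAt.hasDerivAt
  have hpow : HasDerivAt (fun y => F (φ y)) ((k + 1) * z ^ k) z := by
    simpa using (hasDerivAt_pow (k + 1) z).congr_of_eventuallyEq hz
  exact mul_left_cancel₀ hk (by rw [← mul_assoc, hcomp.unique hpow])

/-- **Strebel normal form, zero case** (case `ord₀ ω = k ≥ 0` of Theorem 4.1).
Let `δ > 0`, `k ∈ ℕ`, and let `g : Δ_δ → ℂ` be holomorphic with `g 0 ≠ 0`.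
Then there exist `ε > 0` and an injective holomorphic map `φ : Δ_ε → Δ_δ` with
`φ 0 = 0` such that `φ(z)^k · g(φ(z)) · φ′(z) = z^k` on `Δ_ε`, i.e. `φ` pulls back
the differential `ω = z^k g(z) dz` to the standard form `z^k dz`. -/
theorem strebel_normal_form_zero
    (δ : ℝ) (hδ : 0 < δ) (k : ℕ) (g : ℂ → ℂ)
    (hg : DifferentiableOn ℂ g (Metric.ball 0 δ)) (hg0 : g 0 ≠ 0) :
    ∃ ε : ℝ, 0 < ε ∧ ∃ φ : ℂ → ℂ,
      Set.InjOn φ (Metric.ball 0 ε) ∧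
      DifferentiableOn ℂ φ (Metric.ball 0 ε) ∧
      Set.MapsTo φ (Metric.ball 0 ε) (Metric.ball 0 δ) ∧
      φ 0 = 0 ∧
      ∀ z ∈ Metric.ball (0 : ℂ) ε, φ z ^ k * g (φ z) * deriv φ z = z ^ k := by
  have hball : Metric.ball (0 : ℂ) δ ∈ 𝓝 0 := Metric.ball_mem_nhds 0 hδ
  have hg_an : AnalyticAt ℂ g 0 := hg.analyticAt hball
  have hf : AnalyticAt ℂ (fun w => w ^ k * g w) 0 := by fun_prop
  have hord : analyticOrderAt (fun w => w ^ k * g w) 0 = k :=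
    hf.analyticOrderAt_eq_natCast.mpr ⟨g, hg_an, hg0, by simp⟩
  obtain ⟨φ, hφ, hφ0, hφ', hpull⟩ := exists_analyticAt_pullback_eventuallyEq_pow hf hord
  obtain ⟨s, hs, hinj⟩ := exists_mem_nhds_injOn_of_hasStrictDerivAt hφ.hasStrictDerivAt hφ'
  have hmaps : ∀ᶠ z in 𝓝 0, φ z ∈ Metric.ball 0 δ :=
    hφ.continuousAt.eventually_mem (hφ0.symm ▸ hball)
  obtain ⟨ε, hε, hall⟩ := Metric.eventually_nhds_iff_ball.mp
    ((eventually_mem_set.mpr hs).and (hφ.eventually_analyticAt.and (hmaps.and hpull)))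
  exact ⟨ε, hε, φ, hinj.mono fun z hz => (hall z hz).1,
    fun z hz => (hall z hz).2.1.differentiableAt.differentiableWithinAt,
    fun z hz => (hall z hz).2.2.1, hφ0, fun z hz => (hall z hz).2.2.2⟩
end

section
/- Uniqueness in Strebel normal form, zero case (Theorem 4.1). Let δ > 0, k ∈ ℕ, and let g : Δ_δ → ℂ be holomorphic with g(0) ≠ 0. Suppose φ₁, φ₂ : Δ_ε → Δ_δ are injective holomorphic maps with φ₁(0) = φ₂(0) = 0 which both satisfy φ_i(z)^k · g(φ_i(z)) · φ_i′(z) = z^k for all z ∈ Δ_ε. Then there exist ζ ∈ ℂ with ζ^{k+1} = 1 and ε′ > 0 such that φ₁(z) = φ₂(ζ·z) for all z ∈ Δ_{ε′}; that is, the germ of φ is unique up to precomposition with multiplication by a (k+1)-st root of unity. -/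
/-!
Near `0` the map `φ₂` is invertible, because `z ^ k = φ₂ z ^ k * g (φ₂ z) * φ₂' z` with `g` bounded
forbids `φ₂' 0 = 0`. So `φ₁ = φ₂ ∘ h` for an analytic germ `h` fixing `0`. Since `φ₁` and `φ₂` both
pull `w ^ k * g w dw` back to `z ^ k dz`, the germ `h` pulls `z ^ k dz` back to itself. Integrating,
`h z ^ (k + 1) = z ^ (k + 1)`: at each point `h z` is a root of unity times `z`. There are finitely
many roots, so one of them occurs at points accumulating at `0`, and the identity theorem makes it
the same root throughout a neighbourhood.
-/

open Filter Topology Asymptotics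

section AnalyticGerms

variable {𝕜 : Type*} [NontriviallyNormedField 𝕜]

theorem exists_pow_eq_one_eventuallyEq_mul_of_pow_eventuallyEq {f h : 𝕜 → 𝕜} {x : 𝕜} {n : ℕ}
    (hn : n ≠ 0) (hh : AnalyticAt 𝕜 h x) (hf : AnalyticAt 𝕜 f x)
    (hpow : ∀ᶠ z in 𝓝[≠] x, h z ^ n = f z ^ n) :
    ∃ ζ : 𝕜, ζ ^ n = 1 ∧ h =ᶠ[𝓝 x] fun z => ζ * f z := by
  have : NeZero n := ⟨hn⟩
  have hroot : ∀ᶠ z in 𝓝[≠] x, ∃ ζ : rootsOfUnity n 𝕜, h z = (ζ : 𝕜ˣ) * f z := by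
    filter_upwards [hpow] with z hz
    rcases eq_or_ne (f z) 0 with hfz | hfz
    · have hhz : h z = 0 := by simpa [hfz, hn] using hz
      exact ⟨1, by simp [hfz, hhz]⟩
    · have hquot : (h z / f z) ^ n = 1 := by rw [div_pow, hz, div_self (pow_ne_zero n hfz)]
      exact ⟨rootsOfUnity.mkOfPowEq _ hquot, by
        rw [rootsOfUnity.coe_mkOfPowEq, div_mul_cancel₀ _ hfz]⟩
  obtain ⟨ζ, hζ⟩ := frequently_exists.1 hroot.frequently
  exact ⟨(ζ : 𝕜ˣ), (mem_rootsOfUnity' n _).1 ζ.2,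
    (hh.frequently_eq_iff_eventually_eq (analyticAt_const.mul hf)).1 hζ⟩

theorem eventuallyEq_of_deriv_eventuallyEq [CharZero 𝕜] {E : Type*} [NormedAddCommGroup E]
    [NormedSpace 𝕜 E] [CompleteSpace E] {F G : 𝕜 → E} {x : 𝕜} (hF : AnalyticAt 𝕜 F x)
    (hG : AnalyticAt 𝕜 G x) (hx : F x = G x) (hderiv : deriv F =ᶠ[𝓝 x] deriv G) : F =ᶠ[𝓝 x] G := by
  have hsub : ∀ᶠ z in 𝓝 x, deriv (F - G) z = 0 := by
    filter_upwards [hderiv, hF.eventually_analyticAt, hG.eventually_analyticAt] with z hz hFz hGz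
    rw [deriv_sub hFz.differentiableAt hGz.differentiableAt, hz, sub_self]
  have horder : analyticOrderAt (F - G) x = ⊤ :=
    (analyticOrderAt_deriv_eq_top_iff_of_eq_zero (hF.sub hG) (sub_eq_zero.2 hx)).1
      (analyticOrderAt_eq_top.2 hsub)
  exact (analyticOrderAt_eq_top.1 horder).mono fun z hz => sub_eq_zero.1 hz

theorem exists_analyticAt_comp_eventuallyEq [CompleteSpace 𝕜] [CharZero 𝕜] {φ ψ : 𝕜 → 𝕜} {x y : 𝕜}
    (hφ : AnalyticAt 𝕜 φ x) (hψ : AnalyticAt 𝕜 ψ y) (hψ' : deriv ψ y ≠ 0) (hxy : φ x = ψ y) :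
    ∃ h : 𝕜 → 𝕜, AnalyticAt 𝕜 h x ∧ h x = y ∧ ψ ∘ h =ᶠ[𝓝 x] φ := by
  let σ := hψ.hasStrictDerivAt.localInverse _ _ _ hψ'
  have hσ : AnalyticAt 𝕜 σ (φ x) := hxy ▸ hψ.analyticAt_localInverse hψ'
  have hσy : σ (ψ y) = y := HasStrictFDerivAt.localInverse_apply_image ..
  have hψσ : ∀ᶠ w in 𝓝 (φ x), ψ (σ w) = w :=
    hxy ▸ hψ.hasStrictDerivAt.eventually_right_inverse hψ'
  exact ⟨σ ∘ φ, hσ.comp hφ, by rw [Function.comp_apply, hxy, hσy],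
    hφ.continuousAt.eventually hψσ⟩

end AnalyticGerms

section Pullback

variable {𝕜 : Type*} [NontriviallyNormedField 𝕜]

/-- The pullback `φ*(f dz)` of a one-form, with one-forms in a single variable encoded by their
coefficient: it is `oneFormPullback f φ dz`. -/
noncomputable def oneFormPullback (f φ : 𝕜 → 𝕜) (z : 𝕜) : 𝕜 :=
  f (φ z) * deriv φ z

theorem oneFormPullback_comp (f : 𝕜 → 𝕜) {ψ h : 𝕜 → 𝕜} {z : 𝕜}
    (hψ : DifferentiableAt 𝕜 ψ (h z)) (hh : DifferentiableAt 𝕜 h z) :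
    oneFormPullback f (ψ ∘ h) z = oneFormPullback (oneFormPullback f ψ) h z := by
  simp only [oneFormPullback, Function.comp_apply, deriv_comp z hψ hh, mul_assoc]

theorem oneFormPullback_congr_right (f : 𝕜 → 𝕜) {φ ψ : 𝕜 → 𝕜} {z : 𝕜} (h : φ =ᶠ[𝓝 z] ψ) :
    oneFormPullback f φ z = oneFormPullback f ψ z := by
  rw [oneFormPullback, oneFormPullback, h.eq_of_nhds, h.deriv_eq]

theorem oneFormPullback_eventuallyEq_of_comp_eventuallyEq [CompleteSpace 𝕜] {f ρ φ ψ h : 𝕜 → 𝕜}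
    {x : 𝕜} (hψ : AnalyticAt 𝕜 ψ (h x)) (hh : AnalyticAt 𝕜 h x) (hcomp : ψ ∘ h =ᶠ[𝓝 x] φ)
    (hfφ : oneFormPullback f φ =ᶠ[𝓝 x] ρ) (hfψ : oneFormPullback f ψ =ᶠ[𝓝 (h x)] ρ) :
    oneFormPullback ρ h =ᶠ[𝓝 x] ρ := by
  filter_upwards [hcomp.eventuallyEq_nhds, hh.eventually_analyticAt, hfφ,
    hh.continuousAt.eventually hψ.eventually_analyticAt, hh.continuousAt.eventually hfψ]
    with z hcompz hhz hfφz hψz hfψz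
  calc oneFormPullback ρ h z
      = oneFormPullback (oneFormPullback f ψ) h z := by
        rw [oneFormPullback, oneFormPullback, hfψz]
    _ = oneFormPullback f (ψ ∘ h) z :=
        (oneFormPullback_comp f hψz.differentiableAt hhz.differentiableAt).symm
    _ = oneFormPullback f φ z := oneFormPullback_congr_right f hcompz
    _ = ρ z := hfφz

theorem pow_succ_eventuallyEq_of_oneFormPullback_pow [CompleteSpace 𝕜] [CharZero 𝕜] {h : 𝕜 → 𝕜}
    {k : ℕ} (hh : AnalyticAt 𝕜 h 0) (h0 : h 0 = 0)
    (hpull : oneFormPullback (· ^ k) h =ᶠ[𝓝 0] (· ^ k)) :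
    h ^ (k + 1) =ᶠ[𝓝 0] (· ^ (k + 1)) := by
  refine eventuallyEq_of_deriv_eventuallyEq (hh.pow _) (analyticAt_id.pow _) (by simp [h0]) ?_
  filter_upwards [hpull, hh.eventually_analyticAt] with z hz hhz
  calc deriv (h ^ (k + 1)) z
      = (k + 1 : ℕ) * oneFormPullback (· ^ k) h z := by
        rw [deriv_pow hhz.differentiableAt, Nat.add_sub_cancel, mul_assoc, oneFormPullback]
    _ = deriv (· ^ (k + 1)) z := by rw [hz, deriv_pow_field, Nat.add_sub_cancel]

theorem deriv_ne_zero_of_oneFormPullback_pow_mul [CompleteSpace 𝕜] {g φ : 𝕜 → 𝕜} {k : ℕ}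
    (hg : g =O[𝓝 0] fun _ => (1 : ℝ)) (hφ : AnalyticAt 𝕜 φ 0) (h0 : φ 0 = 0)
    (hpull : oneFormPullback (fun w => w ^ k * g w) φ =ᶠ[𝓝 0] (· ^ k)) :
    deriv φ 0 ≠ 0 := by
  intro hderiv
  have hone : (fun z => dslope φ 0 z ^ k * g (φ z) * deriv φ z) =ᶠ[𝓝[≠] 0] fun _ => 1 := by
    filter_upwards [hpull.filter_mono nhdsWithin_le_nhds, self_mem_nhdsWithin] with z hz hz0
    refine mul_left_cancel₀ (pow_ne_zero k hz0) ?_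
    calc z ^ k * (dslope φ 0 z ^ k * g (φ z) * deriv φ z)
        = (z * dslope φ 0 z) ^ k * g (φ z) * deriv φ z := by ring
      _ = φ z ^ k * g (φ z) * deriv φ z := by
        rw [show z * dslope φ 0 z = φ z by simpa using sub_smul_dslope_of_zero h0 z]
      _ = z ^ k * 1 := by rw [mul_one]; exact hz
  have hslope : (fun z => dslope φ 0 z ^ k) =O[𝓝 0] fun _ => (1 : ℝ) :=
    ((continuousAt_dslope_same.2 hφ.differentiableAt).pow k).tendsto.isBigO_one ℝ
  have hgφ : (fun z => g (φ z)) =O[𝓝 0] fun _ => (1 : ℝ) :=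
    hg.comp_tendsto (by simpa only [ContinuousAt, h0] using hφ.continuousAt)
  have hφ' : deriv φ =o[𝓝 0] fun _ => (1 : ℝ) :=
    (isLittleO_one_iff ℝ).2 (by simpa only [ContinuousAt, hderiv] using hφ.deriv.continuousAt)
  have hlim : Tendsto (fun z => dslope φ 0 z ^ k * g (φ z) * deriv φ z) (𝓝 0) (𝓝 0) :=
    (isLittleO_one_iff ℝ).1 (by simpa only [mul_one] using (hslope.mul hgφ).mul_isLittleO hφ')
  exact zero_ne_one (tendsto_nhds_unique_of_eventuallyEq
    (hlim.mono_left nhdsWithin_le_nhds) tendsto_const_nhds hone)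

end Pullback

theorem strebel_normal_form_zero_unique_general {𝕜 : Type*} [NontriviallyNormedField 𝕜]
    [CompleteSpace 𝕜] [CharZero 𝕜] {k : ℕ} {g φ₁ φ₂ : 𝕜 → 𝕜}
    (hg : g =O[𝓝 0] fun _ => (1 : ℝ))
    (hφ₁ : AnalyticAt 𝕜 φ₁ 0) (hφ₂ : AnalyticAt 𝕜 φ₂ 0) (h0₁ : φ₁ 0 = 0) (h0₂ : φ₂ 0 = 0)
    (hpull₁ : oneFormPullback (fun w => w ^ k * g w) φ₁ =ᶠ[𝓝 0] (· ^ k))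
    (hpull₂ : oneFormPullback (fun w => w ^ k * g w) φ₂ =ᶠ[𝓝 0] (· ^ k)) :
    ∃ ζ : 𝕜, ζ ^ (k + 1) = 1 ∧ ∀ᶠ z in 𝓝 0, φ₁ z = φ₂ (ζ * z) := by
  have hφ₂' : deriv φ₂ 0 ≠ 0 := deriv_ne_zero_of_oneFormPullback_pow_mul hg hφ₂ h0₂ hpull₂
  obtain ⟨h, hh, h0, hcomp⟩ :=
    exists_analyticAt_comp_eventuallyEq hφ₁ hφ₂ hφ₂' (h0₁.trans h0₂.symm)
  have hpull : oneFormPullback (· ^ k) h =ᶠ[𝓝 0] (· ^ k) :=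
    oneFormPullback_eventuallyEq_of_comp_eventuallyEq (by rwa [h0]) hh hcomp hpull₁ (by rwa [h0])
  have hpow : h ^ (k + 1) =ᶠ[𝓝 0] (· ^ (k + 1)) :=
    pow_succ_eventuallyEq_of_oneFormPullback_pow hh h0 hpull
  obtain ⟨ζ, hζ, hhζ⟩ := exists_pow_eq_one_eventuallyEq_mul_of_pow_eventuallyEq k.succ_ne_zero hh
    analyticAt_id (hpow.filter_mono nhdsWithin_le_nhds)
  refine ⟨ζ, hζ, ?_⟩
  filter_upwards [hcomp, hhζ] with z hcompz hhz
  rw [← hcompz, Function.comp_apply, hhz, id]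

/-- **Uniqueness in the Strebel normal form, zero case** (Theorem 4.1).
Let `δ > 0`, `k ∈ ℕ`, and let `g : Δ_δ → ℂ` be holomorphic with `g 0 ≠ 0`.
Suppose `φ₁, φ₂ : Δ_ε → Δ_δ` are injective holomorphic maps with `φ₁ 0 = φ₂ 0 = 0`
which both satisfy `φᵢ(z)^k · g(φᵢ(z)) · φᵢ′(z) = z^k` on `Δ_ε`.  Then there exist
`ζ` with `ζ^(k+1) = 1` and `ε′ > 0` such that `φ₁ z = φ₂ (ζ z)` for all `z ∈ Δ_{ε′}`:
the germ of `φ` is unique up to precomposition with a `(k+1)`-st root of unity. -/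
theorem strebel_normal_form_zero_unique
    (δ ε : ℝ) (hδ : 0 < δ) (hε : 0 < ε) (k : ℕ) (g : ℂ → ℂ)
    (hg : DifferentiableOn ℂ g (Metric.ball 0 δ)) (hg0 : g 0 ≠ 0)
    (φ₁ φ₂ : ℂ → ℂ)
    (hinj₁ : Set.InjOn φ₁ (Metric.ball 0 ε)) (hinj₂ : Set.InjOn φ₂ (Metric.ball 0 ε))
    (hdiff₁ : DifferentiableOn ℂ φ₁ (Metric.ball 0 ε))
    (hdiff₂ : DifferentiableOn ℂ φ₂ (Metric.ball 0 ε))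
    (hmaps₁ : Set.MapsTo φ₁ (Metric.ball 0 ε) (Metric.ball 0 δ))
    (hmaps₂ : Set.MapsTo φ₂ (Metric.ball 0 ε) (Metric.ball 0 δ))
    (h0₁ : φ₁ 0 = 0) (h0₂ : φ₂ 0 = 0)
    (heq₁ : ∀ z ∈ Metric.ball (0 : ℂ) ε, φ₁ z ^ k * g (φ₁ z) * deriv φ₁ z = z ^ k)
    (heq₂ : ∀ z ∈ Metric.ball (0 : ℂ) ε, φ₂ z ^ k * g (φ₂ z) * deriv φ₂ z = z ^ k) :
    ∃ ζ : ℂ, ζ ^ (k + 1) = 1 ∧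
      ∃ ε' : ℝ, 0 < ε' ∧ ∀ z ∈ Metric.ball (0 : ℂ) ε', φ₁ z = φ₂ (ζ * z) := by
  have hball : Metric.ball (0 : ℂ) ε ∈ 𝓝 0 := Metric.ball_mem_nhds 0 hε
  simpa only [Metric.eventually_nhds_iff_ball] using strebel_normal_form_zero_unique_general
    ((hg.differentiableAt (Metric.ball_mem_nhds 0 hδ)).continuousAt.tendsto.isBigO_one ℝ)
    (hdiff₁.analyticAt hball) (hdiff₂.analyticAt hball) h0₁ h0₂
    (eventually_of_mem hball heq₁) (eventually_of_mem hball heq₂)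
end

section
/- Strebel normal form, simple pole case (case ord₀ω = −1 of Theorem 4.1). Let δ > 0 and let u : Δ_δ → ℂ be holomorphic with r := u(0) ≠ 0, and set f(z) = u(z)/z for z ∈ Δ_δ∖{0}. Then there exist ε > 0 and an injective holomorphic map φ : Δ_ε → Δ_δ with φ(0) = 0 such that f(φ(z)) · φ′(z) = r/z for all z ∈ Δ_ε∖{0}. (This expresses that φ pulls back the meromorphic differential ω = f(z) dz, which has a simple pole at 0 with residue r, to the standard form r·dz/z.) -/
/-!
The differential `dz / z` is the logarithmic derivative of the coordinate `z`. Near a simple pole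
`f = u / z` with residue `r`, the quotient `f / r` differs from `1 / z` by a holomorphic function;
if `g` is a primitive of that function, then `f = r * logDeriv ψ` with `ψ z = z * exp (g z)`.
The normalizing map `φ` is a local inverse of `ψ`, because
`(f ∘ φ) * φ' = r * logDeriv (ψ ∘ φ) = r / z`.
-/

open Filter Metric Set Topology

section NontriviallyNormedField

variable {𝕜 : Type*} [NontriviallyNormedField 𝕜]

theorem exists_ball_analyticOnNhd_leftInvOn_of_deriv_ne_zero [CompleteSpace 𝕜] [CharZero 𝕜]
    {ψ : 𝕜 → 𝕜} {a : 𝕜} {s : Set 𝕜} (hψ : AnalyticAt 𝕜 ψ a) (hψ' : deriv ψ a ≠ 0)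
    (hs : s ∈ 𝓝 a) :
    ∃ ε : ℝ, 0 < ε ∧ ∃ φ : 𝕜 → 𝕜, φ (ψ a) = a ∧ AnalyticOnNhd 𝕜 φ (ball (ψ a) ε) ∧
      MapsTo φ (ball (ψ a) ε) s ∧ LeftInvOn ψ φ (ball (ψ a) ε) := by
  let φ := hψ.hasStrictDerivAt.localInverse ψ (deriv ψ a) a hψ'
  have hφa : φ (ψ a) = a := HasStrictFDerivAt.localInverse_apply_image ..
  have hφ : AnalyticAt 𝕜 φ (ψ a) := hψ.analyticAt_localInverse hψ'
  have hinv : ∀ᶠ z in 𝓝 (ψ a), ψ (φ z) = z := HasStrictDerivAt.eventually_right_inverse ..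
  have hmem : ∀ᶠ z in 𝓝 (ψ a), φ z ∈ s := hφ.continuousAt.eventually_mem (by rwa [hφa])
  obtain ⟨ε, hε, hball⟩ := eventually_nhds_iff_ball.1
    (hφ.eventually_analyticAt.and (hmem.and hinv))
  exact ⟨ε, hε, φ, hφa, fun z hz ↦ (hball z hz).1, fun z hz ↦ (hball z hz).2.1,
    fun z hz ↦ (hball z hz).2.2⟩

theorem logDeriv_mul_deriv_of_eventually_leftInverse {ψ φ : 𝕜 → 𝕜} {z : 𝕜}
    (hψ : DifferentiableAt 𝕜 ψ (φ z)) (hφ : DifferentiableAt 𝕜 φ z)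
    (hinv : ∀ᶠ w in 𝓝 z, ψ (φ w) = w) :
    logDeriv ψ (φ z) * deriv φ z = 1 / z := by
  have hcomp : ψ ∘ φ =ᶠ[𝓝 z] id := hinv
  rw [← logDeriv_comp hψ hφ, (logDeriv_congr_nhds hcomp).eq_of_nhds, logDeriv_id]

end NontriviallyNormedField

section Complex

variable {g u : ℂ → ℂ} {c z : ℂ} {δ : ℝ}

theorem hasDerivAt_sub_mul_cexp {g' : ℂ} (hg : HasDerivAt g g' z) :
    HasDerivAt (fun w ↦ (w - c) * Complex.exp (g w))
      ((1 + (z - c) * g') * Complex.exp (g z)) z := by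
  refine (((hasDerivAt_id' z).sub_const c).mul hg.cexp).congr_deriv ?_
  ring

theorem logDeriv_sub_mul_cexp {g' : ℂ} (hg : HasDerivAt g g' z) (hz : z ≠ c) :
    logDeriv (fun w ↦ (w - c) * Complex.exp (g w)) z = 1 / (z - c) + g' := by
  have hzc : z - c ≠ 0 := sub_ne_zero.2 hz
  rw [logDeriv_apply, (hasDerivAt_sub_mul_cexp hg).deriv]
  field_simp

theorem exists_hasDerivAt_dslope_div (hδ : 0 < δ) (hu : DifferentiableOn ℂ u (ball c δ)) (r : ℂ) :
    ∃ g : ℂ → ℂ, ∀ z ∈ ball c δ, HasDerivAt g (dslope u c z / r) z :=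
  (((Complex.differentiableOn_dslope (ball_mem_nhds c hδ)).2 hu).div_const r).isExactOn_ball

theorem exists_coordinate_mul_logDeriv_eq_div (hδ : 0 < δ) (hu : DifferentiableOn ℂ u (ball c δ))
    (hc : u c ≠ 0) :
    ∃ ψ : ℂ → ℂ, ψ c = 0 ∧ deriv ψ c ≠ 0 ∧ DifferentiableOn ℂ ψ (ball c δ) ∧
      ∀ z ∈ ball c δ, z ≠ c → u c * logDeriv ψ z = u z / (z - c) := by
  obtain ⟨g, hg⟩ := exists_hasDerivAt_dslope_div hδ hu (u c)
  have hψ z (hz : z ∈ ball c δ) := hasDerivAt_sub_mul_cexp (c := c) (hg z hz)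
  refine ⟨fun w ↦ (w - c) * Complex.exp (g w), by simp, ?_,
    fun z hz ↦ (hψ z hz).differentiableAt.differentiableWithinAt, fun z hz hzc ↦ ?_⟩
  · simp [(hψ c (mem_ball_self hδ)).deriv]
  · have hu_eq : u z = u c + (z - c) * dslope u c z := by
      rw [← smul_eq_mul, sub_smul_dslope, add_sub_cancel]
    have hzc' : z - c ≠ 0 := sub_ne_zero.2 hzc
    rw [logDeriv_sub_mul_cexp (hg z hz) hzc, hu_eq]
    field_simp

end Complex

/-- **Strebel normal form, simple pole case** (case `ord₀ ω = −1` of Theorem 4.1).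
Let `δ > 0` and `u : Δ_δ → ℂ` holomorphic with `r := u 0 ≠ 0`, and set
`f z = u z / z` for `z ≠ 0`.  Then there exist `ε > 0` and an injective holomorphic
map `φ : Δ_ε → Δ_δ` with `φ 0 = 0` such that `f(φ(z)) · φ′(z) = r/z` on `Δ_ε ∖ {0}`,
i.e. `φ` pulls back the meromorphic differential `ω = f(z) dz`, which has a simple
pole at `0` with residue `r`, to the standard form `r · dz/z`. -/
theorem strebel_normal_form_simple_pole
    (δ : ℝ) (hδ : 0 < δ)
    (u : ℂ → ℂ) (hu : DifferentiableOn ℂ u (Metric.ball 0 δ))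
    (r : ℂ) (hr : r = u 0) (hr0 : r ≠ 0)
    (f : ℂ → ℂ) (hf : ∀ z : ℂ, z ≠ 0 → f z = u z / z) :
    ∃ ε : ℝ, 0 < ε ∧ ∃ φ : ℂ → ℂ,
      Set.InjOn φ (Metric.ball 0 ε) ∧
      DifferentiableOn ℂ φ (Metric.ball 0 ε) ∧
      Set.MapsTo φ (Metric.ball 0 ε) (Metric.ball 0 δ) ∧
      φ 0 = 0 ∧
      ∀ z ∈ Metric.ball (0 : ℂ) ε, z ≠ 0 → f (φ z) * deriv φ z = r / z := by
  subst hr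
  obtain ⟨ψ, hψ0, hψ0', hψ, hlog⟩ := exists_coordinate_mul_logDeriv_eq_div hδ hu hr0
  have hball : Metric.ball 0 δ ∈ 𝓝 (0 : ℂ) := ball_mem_nhds 0 hδ
  obtain ⟨ε, hε, φ, hφ0, hφ, hmaps, hinv⟩ :=
    exists_ball_analyticOnNhd_leftInvOn_of_deriv_ne_zero (hψ.analyticAt hball) hψ0' hball
  rw [hψ0] at hφ0 hφ hmaps hinv
  refine ⟨ε, hε, φ, hinv.injOn, hφ.differentiableOn, hmaps, hφ0, fun z hz hz0 ↦ ?_⟩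
  have hφz0 : φ z ≠ 0 := fun h ↦ hz0 (by rw [← hinv hz, h, hψ0])
  have hψz : DifferentiableAt ℂ ψ (φ z) := hψ.differentiableAt (isOpen_ball.mem_nhds (hmaps hz))
  calc f (φ z) * deriv φ z
      = u 0 * (logDeriv ψ (φ z) * deriv φ z) := by
        rw [hf _ hφz0, ← mul_assoc, hlog _ (hmaps hz) hφz0, sub_zero]
    _ = u 0 / z := by
        rw [logDeriv_mul_deriv_of_eventually_leftInverse hψz (hφ z hz).differentiableAt
          (hinv.eqOn.eventuallyEq_of_mem (isOpen_ball.mem_nhds hz)), mul_one_div]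
end
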